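/- arXiv:1309.0139 — 5 statements merged into one kernel-verified Lean document; each statement's English description precedes it below -/
import Mathlib

section
/- Given real numbers ρ > 0, T > 0 and τ ∈ (0, T], there exists a smooth function Ψ̄ : [0,∞) × [0,T] → ℝ satisfying: (1) the support of Ψ̄ is contained in [0,ρ] × [0,T] and 0 ≤ Ψ̄(r,t) ≤ 1 everywhere; (2) Ψ̄(r,t) = 1 for all (r,t) ∈ [0, ρ/2] × [τ, T], and ∂Ψ̄/∂r(r,t) = 0 for all (r,t) ∈ [0, ρ/2] × [0,T]; (3) there exists a constant C̄ > 0 such that |∂Ψ̄/∂t(r,t)| ≤ C̄ · Ψ̄(r,t)^{1/2} / τ on [0,∞) × [0,T], and Ψ̄(r,0) = 0 for all r ∈ [0,∞); (4) for every a ∈ (0,1) there exists a constant C_a > 0 such that −C_a · Ψ̄(r,t)^a / ρ ≤ ∂Ψ̄/∂r(r,t) ≤ 0 and |∂²Ψ̄/∂r²(r,t)| ≤ C_a · Ψ̄(r,t)^a / ρ² on [0,∞) × [0,T]. -/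
open Polynomial in
lemma glue_bound (p : ℝ[X]) (a : ℝ) (ha : a ∈ Set.Ioo (0 : ℝ) 1) :
    ∃ M : ℝ, 0 ≤ M ∧ ∀ x ∈ Set.Icc (0 : ℝ) 1,
      |p.eval x⁻¹ * expNegInvGlue x| ≤ M * (expNegInvGlue x) ^ a := by
  have hc : 0 < 1 - a := by linarith [ha.2]
  have hcont : Continuous (fun x : ℝ => (p.comp (C (1 - a)⁻¹ * X)).eval (x / (1 - a))⁻¹ *
      expNegInvGlue (x / (1 - a))) :=
    (expNegInvGlue.continuous_polynomial_eval_inv_mul (p.comp (C (1 - a)⁻¹ * X))).comp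
      (continuous_id.div_const _)
  obtain ⟨M, hM⟩ := (isCompact_Icc (a := (0 : ℝ)) (b := 1)).exists_bound_of_continuousOn
    hcont.continuousOn
  refine ⟨M, (norm_nonneg _).trans (hM 0 (by simp)), fun x hx => ?_⟩
  have h1 := hM x hx
  have h2 : expNegInvGlue x = expNegInvGlue (x / (1 - a)) * (expNegInvGlue x) ^ a := by
    rcases eq_or_lt_of_le hx.1 with h0 | h0
    · simp [← h0]
    · have h0' : 0 < x / (1 - a) := by positivity
      simp only [expNegInvGlue, not_le.2 h0, not_le.2 h0', if_false]
      rw [← Real.exp_mul, ← Real.exp_add]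
      congr 1
      field_simp
      ring
  have h3 : (p.comp (C (1 - a)⁻¹ * X)).eval (x / (1 - a))⁻¹ = p.eval x⁻¹ := by
    simp only [eval_comp, eval_mul, eval_C, eval_X]
    congr 1
    field_simp
  rw [h3, Real.norm_eq_abs] at h1
  have h4 : 0 ≤ (expNegInvGlue x) ^ a := Real.rpow_nonneg (expNegInvGlue.nonneg _) _
  calc |p.eval x⁻¹ * expNegInvGlue x|
      = |p.eval x⁻¹ * (expNegInvGlue (x / (1 - a)) * (expNegInvGlue x) ^ a)| := by rw [← h2]
    _ = |p.eval x⁻¹ * expNegInvGlue (x / (1 - a))| * (expNegInvGlue x) ^ a := by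
        rw [← mul_assoc, abs_mul, abs_of_nonneg h4]
    _ ≤ _ := by gcongr

open Polynomial in
lemma transition_bound (a : ℝ) (ha : a ∈ Set.Ioo (0 : ℝ) 1) :
    ∃ K : ℝ, 0 < K ∧ ∀ x : ℝ,
      |deriv Real.smoothTransition x| ≤ K * (Real.smoothTransition x) ^ a ∧
      |deriv (deriv Real.smoothTransition) x| ≤ K * (Real.smoothTransition x) ^ a := by
  obtain ⟨M0, hM0, hE0⟩ := glue_bound 1 a ha
  obtain ⟨M1, hM1, hE1⟩ := glue_bound (X ^ 2 * (1 - derivative 1)) a ha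
  obtain ⟨M2, hM2, hE2⟩ := glue_bound (X ^ 2 * ((X ^ 2 * (1 - derivative 1)) -
    derivative (X ^ 2 * (1 - derivative 1)))) a ha
  have hd0 := expNegInvGlue.hasDerivAt_polynomial_eval_inv_mul 1
  have hd1 := expNegInvGlue.hasDerivAt_polynomial_eval_inv_mul (X ^ 2 * (1 - derivative 1))
  set e1 : ℝ → ℝ := fun x => (X ^ 2 * (1 - derivative (R := ℝ) 1)).eval x⁻¹ * expNegInvGlue x
    with he1
  set e2 : ℝ → ℝ := fun x => (X ^ 2 * ((X ^ 2 * (1 - derivative (R := ℝ) 1)) -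
    derivative (X ^ 2 * (1 - derivative 1)))).eval x⁻¹ * expNegInvGlue x with he2
  simp only [eval_one, one_mul] at hE0 hd0
  set h : ℝ → ℝ := fun x => (expNegInvGlue x + expNegInvGlue (1 - x))⁻¹ with hh
  have hsm : ContDiff ℝ (⊤ : ℕ∞) h :=
    (expNegInvGlue.contDiff.add (expNegInvGlue.contDiff.comp
      (contDiff_const.sub contDiff_id))).inv fun x => (Real.smoothTransition.pos_denom x).ne'
  have hsm1 : ContDiff ℝ (⊤ : ℕ∞) (deriv h) := (contDiff_infty_iff_deriv.1 hsm).2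
  have hsm2 : ContDiff ℝ (⊤ : ℕ∞) (deriv (deriv h)) := (contDiff_infty_iff_deriv.1 hsm1).2
  have hD0 : ∀ x, HasDerivAt h (deriv h x) x := fun x =>
    ((contDiff_infty_iff_deriv.1 hsm).1 x).hasDerivAt
  have hD1 : ∀ x, HasDerivAt (deriv h) (deriv (deriv h) x) x := fun x =>
    ((contDiff_infty_iff_deriv.1 hsm1).1 x).hasDerivAt
  have hS : Real.smoothTransition = fun x => expNegInvGlue x * h x := by
    funext x
    simp [Real.smoothTransition, hh, div_eq_mul_inv]
  have hS1 : deriv Real.smoothTransition = fun x => e1 x * h x + expNegInvGlue x * deriv h x := by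
    funext x
    rw [hS]
    exact ((hd0 x).mul (hD0 x)).deriv
  have hS2 : deriv (deriv Real.smoothTransition) = fun x => (e2 x * h x + e1 x * deriv h x) +
      (e1 x * deriv h x + expNegInvGlue x * deriv (deriv h) x) := by
    funext x
    rw [hS1]
    exact (((hd1 x).mul (hD0 x)).add ((hd0 x).mul (hD1 x))).deriv
  obtain ⟨N0, hN0⟩ := (isCompact_Icc (a := (0 : ℝ)) (b := 1)).exists_bound_of_continuousOn
    hsm.continuous.continuousOn
  obtain ⟨N1, hN1⟩ := (isCompact_Icc (a := (0 : ℝ)) (b := 1)).exists_bound_of_continuousOn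
    hsm1.continuous.continuousOn
  obtain ⟨N2, hN2⟩ := (isCompact_Icc (a := (0 : ℝ)) (b := 1)).exists_bound_of_continuousOn
    hsm2.continuous.continuousOn
  have n0 : 0 ≤ N0 := (norm_nonneg _).trans (hN0 0 (by simp))
  have n1 : 0 ≤ N1 := (norm_nonneg _).trans (hN1 0 (by simp))
  have n2 : 0 ≤ N2 := (norm_nonneg _).trans (hN2 0 (by simp))
  set L : ℝ := M1 * N0 + M0 * N1 + M2 * N0 + 2 * (M1 * N1) + M0 * N2 + 1 with hL
  have m10 := mul_nonneg hM1 n0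
  have m01 := mul_nonneg hM0 n1
  have m20 := mul_nonneg hM2 n0
  have m11 := mul_nonneg hM1 n1
  have m02 := mul_nonneg hM0 n2
  have hLpos : 0 < L := by positivity
  have hle1 : ∀ x, expNegInvGlue x ≤ 1 := by
    intro x
    unfold expNegInvGlue
    split_ifs with hx
    · norm_num
    · exact Real.exp_le_one_iff.2 (by have := inv_pos.2 (not_le.1 hx); linarith)
  have key : ∀ x, (expNegInvGlue x) ^ a ≤ 2 * (Real.smoothTransition x) ^ a := by
    intro x
    have hp := Real.smoothTransition.pos_denom x
    have hD2 : expNegInvGlue x + expNegInvGlue (1 - x) ≤ 2 := by linarith [hle1 x, hle1 (1 - x)]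
    have e : expNegInvGlue x =
        (expNegInvGlue x + expNegInvGlue (1 - x)) * Real.smoothTransition x := by
      unfold Real.smoothTransition
      field_simp
    have hsn := Real.smoothTransition.nonneg x
    calc (expNegInvGlue x) ^ a ≤ (2 * Real.smoothTransition x) ^ a := by
          apply Real.rpow_le_rpow (expNegInvGlue.nonneg _) _ ha.1.le
          calc _ = _ := e
            _ ≤ _ := by gcongr
      _ = 2 ^ a * (Real.smoothTransition x) ^ a := Real.mul_rpow (by norm_num) hsn
      _ ≤ _ := by
          gcongr
          calc (2 : ℝ) ^ a ≤ 2 ^ (1 : ℝ) := Real.rpow_le_rpow_of_exponent_le (by norm_num) ha.2.le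
            _ = 2 := by simp
  refine ⟨2 * L, by positivity, fun x => ?_⟩
  have hSa : 0 ≤ (Real.smoothTransition x) ^ a :=
    Real.rpow_nonneg (Real.smoothTransition.nonneg x) _
  have const_case : ∀ c : ℝ, Real.smoothTransition =ᶠ[nhds x] (fun _ => c) →
      |deriv Real.smoothTransition x| ≤ 2 * L * (Real.smoothTransition x) ^ a ∧
      |deriv (deriv Real.smoothTransition) x| ≤ 2 * L * (Real.smoothTransition x) ^ a := by
    intro c hc
    have h1 := hc.deriv
    rw [hc.deriv_eq, h1.deriv_eq]
    simp
    positivity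
  rcases lt_or_ge x 0 with hx0 | hx0
  · apply const_case 0
    filter_upwards [gt_mem_nhds hx0] with y hy
    exact Real.smoothTransition.zero_of_nonpos hy.le
  rcases lt_or_ge 1 x with hx1 | hx1
  · apply const_case 1
    filter_upwards [lt_mem_nhds hx1] with y hy
    exact Real.smoothTransition.one_of_one_le hy.le
  have hx : x ∈ Set.Icc (0 : ℝ) 1 := ⟨hx0, hx1⟩
  set Ea := (expNegInvGlue x) ^ a with hEa
  have hEa0 : 0 ≤ Ea := Real.rpow_nonneg (expNegInvGlue.nonneg _) _
  have b0 := hE0 x hx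
  have b1 : |e1 x| ≤ M1 * Ea := hE1 x hx
  have b2 : |e2 x| ≤ M2 * Ea := hE2 x hx
  have c0 : |h x| ≤ N0 := hN0 x hx
  have c1 : |deriv h x| ≤ N1 := hN1 x hx
  have c2 : |deriv (deriv h) x| ≤ N2 := hN2 x hx
  have pr : ∀ u v M N : ℝ, 0 ≤ M → |u| ≤ M * Ea → |v| ≤ N → |u * v| ≤ M * N * Ea := by
    intro u v M N hM hu hv
    rw [abs_mul]
    calc |u| * |v| ≤ (M * Ea) * N := by gcongr
      _ = _ := by ring
  have q10 := pr _ _ _ _ hM1 b1 c0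
  have q01 := pr _ _ _ _ hM0 b0 c1
  have q20 := pr _ _ _ _ hM2 b2 c0
  have q11 := pr _ _ _ _ hM1 b1 c1
  have q02 := pr _ _ _ _ hM0 b0 c2
  have fin : L * Ea ≤ 2 * L * (Real.smoothTransition x) ^ a := by
    have := mul_le_mul_of_nonneg_left (key x) hLpos.le
    linarith
  have p10 := mul_nonneg m10 hEa0
  have p01 := mul_nonneg m01 hEa0
  have p20 := mul_nonneg m20 hEa0
  have p11 := mul_nonneg m11 hEa0
  have p02 := mul_nonneg m02 hEa0
  have hLE : L * Ea = M1 * N0 * Ea + M0 * N1 * Ea + M2 * N0 * Ea + 2 * (M1 * N1 * Ea) +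
    M0 * N2 * Ea + Ea := by rw [hL]; ring
  constructor
  · refine le_trans ?_ fin
    rw [hS1]
    have := abs_add_le (e1 x * h x) (expNegInvGlue x * deriv h x)
    simp only
    linarith
  · refine le_trans ?_ fin
    rw [hS2]
    have t1 := abs_add_le (e2 x * h x + e1 x * deriv h x)
      (e1 x * deriv h x + expNegInvGlue x * deriv (deriv h) x)
    have t2 := abs_add_le (e2 x * h x) (e1 x * deriv h x)
    have t3 := abs_add_le (e1 x * deriv h x) (expNegInvGlue x * deriv (deriv h) x)
    simp only
    linarith

lemma le_rpow_self_of_unit {y a : ℝ} (h0 : 0 ≤ y) (h1 : y ≤ 1) (ha : a ∈ Set.Ioo (0 : ℝ) 1) :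
    y ≤ y ^ a := by
  rcases eq_or_lt_of_le h0 with h | h
  · rw [← h, Real.zero_rpow ha.1.ne']
  · calc y = y ^ (1 : ℝ) := (Real.rpow_one y).symm
      _ ≤ y ^ a := Real.rpow_le_rpow_of_exponent_ge h h1 ha.2.le

/-- The cutoff-function lemma (Lemma 2.2): given `ρ > 0`, `T > 0` and `τ ∈ (0, T]`,
there is a smooth function `Ψ̄(r, t)` of the radial variable `r ≥ 0` and the time
variable `t ∈ [0, T]` with values in `[0, 1]`, supported in `[0, ρ] × [0, T]`,
equal to `1` on `[0, ρ/2] × [τ, T]`, with vanishing `r`-derivative on `[0, ρ/2]`,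
satisfying `|∂Ψ̄/∂t| ≤ C̄·Ψ̄^{1/2}/τ`, `Ψ̄(·, 0) = 0`, and for each `a ∈ (0, 1)` the
bounds `−Cₐ·Ψ̄^a/ρ ≤ ∂Ψ̄/∂r ≤ 0` and `|∂²Ψ̄/∂r²| ≤ Cₐ·Ψ̄^a/ρ²`. -/
theorem exists_cutoff_function (ρ T τ : ℝ) (hρ : 0 < ρ) (hT : 0 < T)
    (hτ : τ ∈ Set.Ioc 0 T) :
    ∃ Ψ : ℝ → ℝ → ℝ,
      -- smoothness (jointly in both variables)
      ContDiff ℝ (⊤ : ℕ∞) (fun p : ℝ × ℝ => Ψ p.1 p.2) ∧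
      -- (1) support in [0, ρ] × [0, T] and values in [0, 1]
      (∀ r ∈ Set.Ici (0 : ℝ), ∀ t ∈ Set.Icc 0 T, ρ < r → Ψ r t = 0) ∧
      (∀ r ∈ Set.Ici (0 : ℝ), ∀ t ∈ Set.Icc 0 T, 0 ≤ Ψ r t ∧ Ψ r t ≤ 1) ∧
      -- (2) Ψ = 1 on [0, ρ/2] × [τ, T] and ∂Ψ/∂r = 0 on [0, ρ/2] × [0, T]
      (∀ r ∈ Set.Icc 0 (ρ / 2), ∀ t ∈ Set.Icc τ T, Ψ r t = 1) ∧
      (∀ r ∈ Set.Icc 0 (ρ / 2), ∀ t ∈ Set.Icc 0 T,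
        deriv (fun s => Ψ s t) r = 0) ∧
      -- (3) time-derivative bound and vanishing at t = 0
      (∃ C₀ : ℝ, 0 < C₀ ∧ ∀ r ∈ Set.Ici (0 : ℝ), ∀ t ∈ Set.Icc 0 T,
        |deriv (fun s => Ψ r s) t| ≤ C₀ * (Ψ r t) ^ ((1 : ℝ) / 2) / τ) ∧
      (∀ r ∈ Set.Ici (0 : ℝ), Ψ r 0 = 0) ∧
      -- (4) radial-derivative bounds for each a ∈ (0, 1)
      (∀ a ∈ Set.Ioo (0 : ℝ) 1, ∃ Ca : ℝ, 0 < Ca ∧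
        ∀ r ∈ Set.Ici (0 : ℝ), ∀ t ∈ Set.Icc 0 T,
          (-(Ca * (Ψ r t) ^ a / ρ) ≤ deriv (fun s => Ψ s t) r ∧
            deriv (fun s => Ψ s t) r ≤ 0) ∧
          |deriv (fun s => deriv (fun s' => Ψ s' t) s) r| ≤ Ca * (Ψ r t) ^ a / ρ ^ 2) := by
  have hτ0 : 0 < τ := hτ.1
  have hcd : ContDiff ℝ (⊤ : ℕ∞) Real.smoothTransition := Real.smoothTransition.contDiff
  have hcd1 := contDiff_infty_iff_deriv.1 hcd
  have hcd2 := contDiff_infty_iff_deriv.1 hcd1.2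
  set S := Real.smoothTransition with hSdef
  have S0 : ∀ x, 0 ≤ S x := Real.smoothTransition.nonneg
  have S1 : ∀ x, S x ≤ 1 := Real.smoothTransition.le_one
  have hlin : ∀ r, HasDerivAt (fun s : ℝ => 2 - 2 * s / ρ) (-(2 / ρ)) r := by
    intro r
    have := (((hasDerivAt_id r).const_mul 2).div_const ρ).const_sub 2
    simpa using this
  have dr : ∀ t r, deriv (fun s => S (2 - 2 * s / ρ) * S (t / τ)) r =
      deriv S (2 - 2 * r / ρ) * (-(2 / ρ)) * S (t / τ) := by
    intro t r
    exact (((hcd1.1 _).hasDerivAt.comp r (hlin r)).mul_const _).deriv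
  have drr : ∀ t r, deriv (fun s => deriv (fun s' => S (2 - 2 * s' / ρ) * S (t / τ)) s) r =
      deriv (deriv S) (2 - 2 * r / ρ) * (-(2 / ρ)) * (-(2 / ρ)) * S (t / τ) := by
    intro t r
    simp only [dr]
    exact ((((hcd2.1 _).hasDerivAt.comp r (hlin r)).mul_const _).mul_const _).deriv
  have dt : ∀ r t, deriv (fun s => S (2 - 2 * r / ρ) * S (s / τ)) t =
      S (2 - 2 * r / ρ) * (deriv S (t / τ) * (1 / τ)) := by
    intro r t
    exact (((hcd1.1 _).hasDerivAt.comp t ((hasDerivAt_id t).div_const τ)).const_mul _).deriv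
  have hmono : ∀ x, 0 ≤ deriv S x := fun x => Real.smoothTransition.monotone.deriv_nonneg
  refine ⟨fun r t => S (2 - 2 * r / ρ) * S (t / τ), ?_, ?_, ?_, ?_, ?_, ?_, ?_, ?_⟩
  · exact (hcd.comp (contDiff_const.sub ((contDiff_const.mul contDiff_fst).div_const _))).mul
      (hcd.comp (contDiff_snd.div_const _))
  · intro r _ t _ hr
    have : S (2 - 2 * r / ρ) = 0 := by
      apply Real.smoothTransition.zero_of_nonpos
      have : 1 ≤ r / ρ := (one_le_div hρ).2 hr.le
      rw [mul_div_assoc]; linarith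
    simp [this]
  · intro r _ t _
    exact ⟨mul_nonneg (S0 _) (S0 _), mul_le_one₀ (S1 _) (S0 _) (S1 _)⟩
  · intro r hr t ht
    have e1 : S (2 - 2 * r / ρ) = 1 := by
      apply Real.smoothTransition.one_of_one_le
      have : 2 * r / ρ ≤ 1 := (div_le_one hρ).2 (by linarith [hr.2])
      linarith
    have e2 : S (t / τ) = 1 := Real.smoothTransition.one_of_one_le ((one_le_div hτ0).2 ht.1)
    simp [e1, e2]
  · intro r hr t _
    rw [dr]
    have e1 : S (2 - 2 * r / ρ) = 1 := by
      apply Real.smoothTransition.one_of_one_le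
      have : 2 * r / ρ ≤ 1 := (div_le_one hρ).2 (by linarith [hr.2])
      linarith
    have : IsLocalMax S (2 - 2 * r / ρ) := Filter.Eventually.of_forall fun y => by
      rw [e1]; exact S1 y
    simp [this.deriv_eq_zero]
  · have hhalf : (1 : ℝ) / 2 ∈ Set.Ioo (0 : ℝ) 1 := by constructor <;> norm_num
    obtain ⟨K, hK, hb⟩ := transition_bound (1 / 2) hhalf
    refine ⟨K, hK, fun r _ t _ => ?_⟩
    rw [dt, Real.mul_rpow (S0 _) (S0 _), abs_mul, abs_mul, abs_of_nonneg (S0 _),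
      abs_of_pos (one_div_pos.2 hτ0)]
    have h1 := le_rpow_self_of_unit (S0 (2 - 2 * r / ρ)) (S1 _) hhalf
    have h2 := (hb (t / τ)).1
    calc S (2 - 2 * r / ρ) * (|deriv S (t / τ)| * (1 / τ))
        ≤ S (2 - 2 * r / ρ) ^ ((1 : ℝ) / 2) * ((K * S (t / τ) ^ ((1 : ℝ) / 2)) * (1 / τ)) := by
          gcongr
          exact Real.rpow_nonneg (S0 _) _
      _ = _ := by ring
  · intro r _
    have : S (0 / τ) = 0 := by simp [hSdef]
    simp only [this, mul_zero]
  · intro a ha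
    obtain ⟨K, hK, hb⟩ := transition_bound a ha
    refine ⟨4 * K, by positivity, fun r _ t _ => ?_⟩
    rw [drr, dr, Real.mul_rpow (S0 _) (S0 _)]
    have h1 := le_rpow_self_of_unit (S0 (t / τ)) (S1 _) ha
    obtain ⟨h2, h3⟩ := hb (2 - 2 * r / ρ)
    have hm := hmono (2 - 2 * r / ρ)
    rw [abs_of_nonneg hm] at h2
    have hA : 0 ≤ S (2 - 2 * r / ρ) ^ a := Real.rpow_nonneg (S0 _) _
    have hB : 0 ≤ S (t / τ) ^ a := Real.rpow_nonneg (S0 _) _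
    have hT0 := S0 (t / τ)
    have h4 : deriv S (2 - 2 * r / ρ) * S (t / τ) ≤
        (K * S (2 - 2 * r / ρ) ^ a) * S (t / τ) ^ a := by gcongr
    have h5 : |deriv (deriv S) (2 - 2 * r / ρ)| * S (t / τ) ≤
        (K * S (2 - 2 * r / ρ) ^ a) * S (t / τ) ^ a := by gcongr
    have hR : 0 ≤ (K * S (2 - 2 * r / ρ) ^ a) * S (t / τ) ^ a := by positivity
    refine ⟨⟨?_, ?_⟩, ?_⟩
    · have e1 : deriv S (2 - 2 * r / ρ) * (-(2 / ρ)) * S (t / τ) =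
        -((2 * (deriv S (2 - 2 * r / ρ) * S (t / τ))) / ρ) := by ring
      rw [e1]
      apply neg_le_neg
      apply div_le_div_of_nonneg_right _ hρ.le
      linarith
    · have e1 : deriv S (2 - 2 * r / ρ) * (-(2 / ρ)) * S (t / τ) =
        -((2 * (deriv S (2 - 2 * r / ρ) * S (t / τ))) / ρ) := by ring
      rw [e1]
      exact neg_nonpos.2 (by positivity)
    · have e1 : deriv (deriv S) (2 - 2 * r / ρ) * (-(2 / ρ)) * (-(2 / ρ)) * S (t / τ) =
        (4 * (deriv (deriv S) (2 - 2 * r / ρ) * S (t / τ))) / ρ ^ 2 := by ring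
      rw [e1, abs_div, abs_of_pos (by positivity : 0 < ρ ^ 2), abs_mul, abs_mul,
        abs_of_nonneg hT0, abs_of_pos (by norm_num : (0 : ℝ) < 4)]
      apply div_le_div_of_nonneg_right _ (by positivity)
      linarith
end

section
/- Let n ≥ 1, T > 0 and A₁, A₂, A₃ > 0. Let u : ℝⁿ × (0,T] → (0,∞) be a smooth positive function, set f = log u, and assume that ∂f/∂t(x,t) ≥ (1/A₁)(‖∇f(x,t)‖² − A₂ − A₃/t) for all x ∈ ℝⁿ and t ∈ (0,T]. Then for all 0 < t₁ < t₂ ≤ T, all x₁, x₂ ∈ ℝⁿ, and every continuously differentiable path γ : [t₁,t₂] → ℝⁿ with γ(t₁) = x₁ and γ(t₂) = x₂, one has u(x₂,t₂) ≥ u(x₁,t₁) · (t₂/t₁)^{−A₃/A₁} · exp( −(A₁/4)∫_{t₁}^{t₂} ‖γ'(t)‖² dt − (A₂/A₁)(t₂ − t₁) ). -/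
/-- The Harnack integration lemma (Lemma 3.1) on static Euclidean space: if
`f = log u` satisfies `∂f/∂t ≥ (1/A₁)(‖∇f‖² − A₂ − A₃/t)` on `ℝⁿ × (0, T]`, then
along any C¹ path `γ` joining `(x₁, t₁)` to `(x₂, t₂)` one has
`u(x₂,t₂) ≥ u(x₁,t₁)·(t₂/t₁)^{−A₃/A₁}·exp(−(A₁/4)∫‖γ'‖² − (A₂/A₁)(t₂−t₁))`. -/
theorem harnack_integration_lemma (n : ℕ) (hn : 1 ≤ n) (T A₁ A₂ A₃ : ℝ)
    (hT : 0 < T) (hA₁ : 0 < A₁) (hA₂ : 0 < A₂) (hA₃ : 0 < A₃)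
    (u : EuclideanSpace ℝ (Fin n) → ℝ → ℝ)
    (hu : ContDiff ℝ (⊤ : ℕ∞) (fun p : EuclideanSpace ℝ (Fin n) × ℝ => u p.1 p.2))
    (hupos : ∀ x, ∀ t ∈ Set.Ioc 0 T, 0 < u x t)
    (hf : ∀ x, ∀ t ∈ Set.Ioc 0 T,
      deriv (fun s => Real.log (u x s)) t ≥
        (1 / A₁) * (‖gradient (fun y => Real.log (u y t)) x‖ ^ 2 - A₂ - A₃ / t))
    (t₁ t₂ : ℝ) (ht₁ : 0 < t₁) (ht₁₂ : t₁ < t₂) (ht₂ : t₂ ≤ T)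
    (x₁ x₂ : EuclideanSpace ℝ (Fin n))
    (γ γ' : ℝ → EuclideanSpace ℝ (Fin n))
    (hγ : ∀ t ∈ Set.Icc t₁ t₂, HasDerivAt γ (γ' t) t)
    (hγ' : ContinuousOn γ' (Set.Icc t₁ t₂))
    (hγ₁ : γ t₁ = x₁) (hγ₂ : γ t₂ = x₂) :
    u x₂ t₂ ≥ u x₁ t₁ * (t₂ / t₁) ^ (-(A₃ / A₁)) *
      Real.exp (-(A₁ / 4) * (∫ t in t₁..t₂, ‖γ' t‖ ^ 2) - (A₂ / A₁) * (t₂ - t₁)) := by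
  have hpos : ∀ t ∈ Set.Icc t₁ t₂, 0 < t := fun t ht => lt_of_lt_of_le ht₁ ht.1
  have hmem : ∀ t ∈ Set.Icc t₁ t₂, t ∈ Set.Ioc 0 T := fun t ht =>
    ⟨hpos t ht, ht.2.trans ht₂⟩
  have hdF : ∀ x, ∀ t ∈ Set.Icc t₁ t₂, DifferentiableAt ℝ
      (fun p : EuclideanSpace ℝ (Fin n) × ℝ => Real.log (u p.1 p.2)) (x, t) := by
    intro x t ht
    have h1 : DifferentiableAt ℝ
      (fun p : EuclideanSpace ℝ (Fin n) × ℝ => u p.1 p.2) (x, t) :=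
      (hu.differentiable (by simp)) (x, t)
    exact h1.log (hupos x t (hmem t ht)).ne'
  have key : ∀ t ∈ Set.Icc t₁ t₂, ∃ d : ℝ,
      HasDerivAt (fun s => Real.log (u (γ s) s) + A₂ / A₁ * s + A₃ / A₁ * Real.log s) d t ∧
      -(A₁ / 4) * ‖γ' t‖ ^ 2 ≤ d := by
    intro t ht
    have htp := hpos t ht
    obtain ⟨L, hL⟩ := hdF (γ t) t ht
    have h1 : HasDerivAt (fun s => Real.log (u (γ s) s)) (L (γ' t, 1)) t :=
      HasFDerivAt.comp_hasDerivAt (f := fun s => (γ s, s)) t hL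
        ((hγ t ht).prodMk (hasDerivAt_id t))
    have h2 : HasDerivAt (fun s => Real.log (u (γ t) s)) (L (0, 1)) t :=
      HasFDerivAt.comp_hasDerivAt (f := fun s => (γ t, s)) t hL
        ((hasDerivAt_const t (γ t)).prodMk (hasDerivAt_id t))
    have h3 : HasFDerivAt (fun y => Real.log (u y t))
        (L.comp (ContinuousLinearMap.inl ℝ (EuclideanSpace ℝ (Fin n)) ℝ)) (γ t) :=
      HasFDerivAt.comp (f := fun y => (y, t)) (γ t) hL (hasFDerivAt_prodMk_left (γ t) t)
    have h4 : inner ℝ (gradient (fun y => Real.log (u y t)) (γ t)) (γ' t) = L (γ' t, 0) := by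
      rw [gradient, h3.fderiv, InnerProductSpace.toDual_symm_apply]
      simp
    have h5 := hf (γ t) t (hmem t ht)
    rw [h2.deriv] at h5
    have h6 := abs_le.1 (abs_real_inner_le_norm
      (gradient (fun y => Real.log (u y t)) (γ t)) (γ' t))
    rw [h4] at h6
    have h7 : L (γ' t, 1) = L (γ' t, 0) + L (0, 1) := by
      rw [← map_add]; simp
    refine ⟨_, (h1.add ((hasDerivAt_id t).const_mul (A₂ / A₁))).add
      ((Real.hasDerivAt_log htp.ne').const_mul (A₃ / A₁)), ?_⟩
    rw [h7]
    set G := ‖gradient (fun y => Real.log (u y t)) (γ t)‖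
    set v := ‖γ' t‖
    have h8 : 1 / A₁ * (G ^ 2 - A₂ - A₃ / t) =
      G ^ 2 / A₁ - A₂ / A₁ * 1 - A₃ / A₁ * t⁻¹ := by field_simp
    have h9 : G ^ 2 / A₁ - G * v + A₁ / 4 * v ^ 2 = (G - A₁ / 2 * v) ^ 2 / A₁ := by
      field_simp; ring
    have h10 : 0 ≤ (G - A₁ / 2 * v) ^ 2 / A₁ := by positivity
    linarith [h6.1]
  choose! d hd hd' using key
  have hint := intervalIntegral.integral_le_sub_of_hasDeriv_right_of_le
    (φ := fun t => -(A₁ / 4) * ‖γ' t‖ ^ 2) ht₁₂.le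
    (fun t ht => (hd t ht).continuousAt.continuousWithinAt)
    (fun t ht => (hd t (Set.Ioo_subset_Icc_self ht)).hasDerivWithinAt)
    ((continuousOn_const.mul (hγ'.norm.pow 2)).integrableOn_Icc)
    (fun t ht => hd' t (Set.Ioo_subset_Icc_self ht))
  rw [intervalIntegral.integral_const_mul, hγ₁, hγ₂] at hint
  have hu1 := hupos x₁ t₁ (hmem t₁ ⟨le_rfl, ht₁₂.le⟩)
  have hu2 := hupos x₂ t₂ (hmem t₂ ⟨ht₁₂.le, le_rfl⟩)
  have ht₂' : 0 < t₂ := ht₁.trans ht₁₂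
  rw [ge_iff_le, Real.rpow_def_of_pos (div_pos ht₂' ht₁), Real.log_div ht₂'.ne' ht₁.ne']
  nth_rewrite 1 [← Real.exp_log hu1]
  rw [← Real.exp_add, ← Real.exp_add, ← Real.le_log_iff_exp_le hu2]
  linarith
end

section
/- Let n ≥ 1, T > 0 and β ≥ 1. Let u : ℝⁿ × [0,T] → (0,∞) be a smooth positive function satisfying the heat equation ∂u/∂t = Δu, set f = log u, and define F(x,t) = t·(‖∇f(x,t)‖² − β·∂f/∂t(x,t)). Then for all real numbers a, b > 0 with a + 2b = 1/β, the inequality ΔF − ∂F/∂t ≥ −2⟨∇f, ∇F⟩ + (2aβt/n)·(‖∇f‖² − ∂f/∂t)² − (‖∇f‖² − β·∂f/∂t) holds at every point of ℝⁿ × (0,T]. -/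
open scoped RealInnerProductSpace

/-- The Euclidean Laplacian of `f : ℝⁿ → ℝ` at `x`: the trace of the Hessian,
computed as the sum of the second partial derivatives in the coordinate directions. -/
noncomputable def laplacian {n : ℕ} (f : EuclideanSpace ℝ (Fin n) → ℝ)
    (x : EuclideanSpace ℝ (Fin n)) : ℝ :=
  ∑ i, fderiv ℝ (fun y => fderiv ℝ f y (EuclideanSpace.single i 1)) x
    (EuclideanSpace.single i 1)


/-- Directional derivative. -/
noncomputable def dd {V : Type*} [NormedAddCommGroup V] [NormedSpace ℝ V] (v : V) (g : V → ℝ)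
    (p : V) : ℝ := fderiv ℝ g p v

section DD

variable {V : Type*} [NormedAddCommGroup V] [NormedSpace ℝ V] {U : Set V}

theorem dd_smooth (hU : IsOpen U) {g : V → ℝ} (hg : ContDiffOn ℝ (⊤ : ℕ∞) g U) (v : V) :
    ContDiffOn ℝ (⊤ : ℕ∞) (dd v g) U := by
  have h := hg.fderiv_of_isOpen (m := (⊤ : ℕ∞)) hU (by simp)
  exact h.clm_apply contDiffOn_const

theorem diffAt (hU : IsOpen U) {g : V → ℝ} (hg : ContDiffOn ℝ (⊤ : ℕ∞) g U) {p : V}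
    (hp : p ∈ U) : DifferentiableAt ℝ g p :=
  (hg.contDiffAt (hU.mem_nhds hp)).differentiableAt (by simp)

theorem dd_congr (hU : IsOpen U) {g h : V → ℝ} (hgh : ∀ p ∈ U, g p = h p) {p : V}
    (hp : p ∈ U) (v : V) : dd v g p = dd v h p := by
  unfold dd
  have : g =ᶠ[nhds p] h := Filter.eventuallyEq_of_mem (hU.mem_nhds hp) hgh
  rw [this.fderiv_eq]

theorem dd_symm (hU : IsOpen U) {g : V → ℝ} (hg : ContDiffOn ℝ (⊤ : ℕ∞) g U) {p : V}
    (hp : p ∈ U) (v w : V) : dd v (dd w g) p = dd w (dd v g) p := by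
  have hc := hg.contDiffAt (hU.mem_nhds hp)
  have h := hc.isSymmSndFDerivAt (by simp only [minSmoothness_of_isRCLikeNormedField]; exact WithTop.coe_le_coe.2 (le_top : (2 : ℕ∞) ≤ ⊤))
  have hd : DifferentiableAt ℝ (fderiv ℝ g) p :=
    (hc.fderiv_right (m := (1 : ℕ∞)) (by exact_mod_cast le_top)).differentiableAt (by simp)
  have key : ∀ v w : V, dd v (dd w g) p = fderiv ℝ (fderiv ℝ g) p v w := by
    intro v w
    have h1 := hd.hasFDerivAt.clm_apply (hasFDerivAt_const w p)
    unfold dd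
    rw [h1.fderiv]
    simp
  rw [key, key]
  exact h v w

theorem dd_mul {g h : V → ℝ} {p : V} (hg : DifferentiableAt ℝ g p)
    (hh : DifferentiableAt ℝ h p) (v : V) :
    dd v (fun q => g q * h q) p = dd v g p * h p + g p * dd v h p := by
  unfold dd
  rw [(hg.hasFDerivAt.fun_mul hh.hasFDerivAt).fderiv]
  simp
  ring

theorem dd_sub {g h : V → ℝ} {p : V} (hg : DifferentiableAt ℝ g p)
    (hh : DifferentiableAt ℝ h p) (v : V) :
    dd v (fun q => g q - h q) p = dd v g p - dd v h p := by
  unfold dd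
  rw [(hg.hasFDerivAt.fun_sub hh.hasFDerivAt).fderiv]
  simp

theorem dd_cmul {g : V → ℝ} {p : V} (hg : DifferentiableAt ℝ g p) (c : ℝ) (v : V) :
    dd v (fun q => c * g q) p = c * dd v g p := by
  unfold dd
  rw [(hg.hasFDerivAt.const_mul c).fderiv]
  simp

theorem dd_sum {ι : Type*} [Fintype ι] {g : ι → V → ℝ} {p : V}
    (hg : ∀ i, DifferentiableAt ℝ (g i) p) (v : V) :
    dd v (fun q => ∑ i, g i q) p = ∑ i, dd v (g i) p := by
  unfold dd
  rw [(HasFDerivAt.fun_sum (fun i _ => (hg i).hasFDerivAt)).fderiv]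
  simp

end DD

section Slice

variable {n : ℕ}

/-- Spatial coordinate direction. -/
noncomputable def ev (i : Fin n) : EuclideanSpace ℝ (Fin n) × ℝ := (EuclideanSpace.single i 1, 0)

/-- Time direction. -/
noncomputable def tv : EuclideanSpace ℝ (Fin n) × ℝ := (0, 1)

theorem slice_x {g : EuclideanSpace ℝ (Fin n) × ℝ → ℝ} {x : EuclideanSpace ℝ (Fin n)} {t : ℝ}
    (hg : DifferentiableAt ℝ g (x, t)) (i : Fin n) :
    fderiv ℝ (fun y => g (y, t)) x (EuclideanSpace.single i 1) = dd (ev i) g (x, t) := by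
  have h := hg.hasFDerivAt.comp x (hasFDerivAt_prodMk_left (𝕜 := ℝ) x t)
  have h2 : (g ∘ fun y => (y, t)) = fun y => g (y, t) := rfl
  rw [h2] at h
  rw [h.fderiv]
  simp [dd, ev]

theorem slice_t {g : EuclideanSpace ℝ (Fin n) × ℝ → ℝ} {x : EuclideanSpace ℝ (Fin n)} {t : ℝ}
    (hg : DifferentiableAt ℝ g (x, t)) :
    HasDerivAt (fun s => g (x, s)) (dd tv g (x, t)) t := by
  have h := (hg.hasFDerivAt.comp t (hasFDerivAt_prodMk_right x t)).hasDerivAt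
  have h2 : (g ∘ fun s => (x, s)) = fun s => g (x, s) := rfl
  rw [h2] at h
  simpa [dd, tv] using h

theorem inner_grad (g h : EuclideanSpace ℝ (Fin n) → ℝ) (x : EuclideanSpace ℝ (Fin n)) :
    ⟪gradient g x, gradient h x⟫ = ∑ i, fderiv ℝ g x (EuclideanSpace.single i 1) *
      fderiv ℝ h x (EuclideanSpace.single i 1) := by
  have key : ∀ (g : EuclideanSpace ℝ (Fin n) → ℝ) (i : Fin n),
      fderiv ℝ g x (EuclideanSpace.single i 1) = gradient g x i := by
    intro g i
    have : fderiv ℝ g x (EuclideanSpace.single i 1) =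
        ⟪gradient g x, EuclideanSpace.single i (1 : ℝ)⟫ := by
      simp [gradient]
    rw [this, EuclideanSpace.inner_single_right]
    simp
  rw [PiLp.inner_apply]
  simp only [key]
  refine Finset.sum_congr rfl fun i _ => ?_
  simp [mul_comm]

theorem slice_lap {U : Set (EuclideanSpace ℝ (Fin n) × ℝ)} (hU : IsOpen U)
    {g : EuclideanSpace ℝ (Fin n) × ℝ → ℝ} (hg : ContDiffOn ℝ (⊤ : ℕ∞) g U) {t : ℝ}
    (ht : ∀ y, (y, t) ∈ U) (x : EuclideanSpace ℝ (Fin n)) :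
    laplacian (fun y => g (y, t)) x = ∑ i, dd (ev i) (dd (ev i) g) (x, t) := by
  unfold laplacian
  refine Finset.sum_congr rfl fun i _ => ?_
  have : (fun y => fderiv ℝ (fun y => g (y, t)) y (EuclideanSpace.single i 1)) =
      fun y => dd (ev i) g (y, t) := funext fun y => slice_x (diffAt hU hg (ht y)) i
  rw [this]
  exact slice_x (diffAt hU (dd_smooth hU hg _) (ht x)) i

theorem final_ineq (hn : 1 ≤ n) (β a b t τ ττ : ℝ) (hβ : 1 ≤ β) (hb : 0 < b) (ht : 0 < t)
    (hab : a + 2 * b = 1 / β)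
    (f : Fin n → ℝ) (fτ fττ : Fin n → ℝ) (H : Fin n → Fin n → ℝ) (K : Fin n → Fin n → ℝ)
    (h0 : τ = ∑ i, H i i + ∑ i, f i * f i)
    (h1 : ∀ k, fτ k = ∑ i, K k i + ∑ i, 2 * (f i * H k i))
    (h2 : ττ = ∑ i, fττ i + ∑ i, 2 * (f i * fτ i)) :
    (∑ k, t * (∑ i, 2 * (H k i * H k i + f i * K i k) - β * fττ k)) -
      ((∑ i, f i * f i - β * τ) + t * (∑ i, 2 * (f i * fτ i) - β * ττ)) ≥
    -2 * (∑ k, f k * (t * (∑ i, 2 * (f i * H k i) - β * fτ k))) +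
      (2 * a * β * t / n) * (∑ i, f i * f i - τ) ^ 2 - (∑ i, f i * f i - β * τ) := by
  have hn' : (0 : ℝ) < n := by exact_mod_cast hn
  have hβ0 : 0 < β := by linarith
  have haβ : a * β ≤ 1 := by
    have : (a + 2 * b) * β = 1 := by rw [hab]; field_simp
    nlinarith [mul_pos hb hβ0]
  have cs : (∑ i, H i i) ^ 2 ≤ n * ∑ k, ∑ i, H k i * H k i := by
    calc (∑ i, H i i) ^ 2 ≤ (Finset.univ : Finset (Fin n)).card * ∑ i, H i i ^ 2 :=
          sq_sum_le_card_mul_sum_sq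
      _ ≤ n * ∑ k, ∑ i, H k i * H k i := by
          rw [Finset.card_univ, Fintype.card_fin]
          refine mul_le_mul_of_nonneg_left ?_ hn'.le
          refine Finset.sum_le_sum fun k _ => ?_
          rw [sq]
          exact Finset.single_le_sum (f := fun i => H k i * H k i)
            (fun i _ => mul_self_nonneg _) (Finset.mem_univ k)
  set S := ∑ k, ∑ i, H k i * H k i with hS
  have e0 : ∑ i, f i * f i - τ = -∑ i, H i i := by rw [h0]; ring
  have hQ : (2 * a * β * t / n) * (∑ i, f i * f i - τ) ^ 2 ≤ 2 * t * S := by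
    rw [e0, neg_sq]
    have h3 : (∑ i, H i i) ^ 2 / n ≤ S := by
      rw [div_le_iff₀ hn']; linarith
    have h4 : a * β * ((∑ i, H i i) ^ 2 / n) ≤ 1 * ((∑ i, H i i) ^ 2 / n) :=
      mul_le_mul_of_nonneg_right haβ (by positivity)
    calc _ = 2 * t * (a * β * ((∑ i, H i i) ^ 2 / n)) := by ring
      _ ≤ _ := mul_le_mul_of_nonneg_left (by linarith) (by positivity)
  -- the sums
  have A : (∑ k, t * (∑ i, 2 * (H k i * H k i + f i * K i k) - β * fττ k)) =
      t * (2 * S + 2 * (∑ k, f k * ∑ i, K k i) - β * ∑ k, fττ k) := by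
    have c : ∑ k, f k * ∑ i, K k i = ∑ k, ∑ i, f i * K i k := by
      rw [Finset.sum_comm]
      simp only [Finset.mul_sum]
    rw [c, hS]
    simp only [Finset.mul_sum, Finset.sum_add_distrib, Finset.sum_sub_distrib, mul_add, mul_sub]
  have B : ∑ k, f k * fτ k = (∑ k, f k * ∑ i, K k i) + ∑ k, f k * ∑ i, 2 * (f i * H k i) := by
    rw [← Finset.sum_add_distrib]
    refine Finset.sum_congr rfl fun k _ => ?_
    rw [h1 k]; ring
  have C : ∑ k, f k * (t * (∑ i, 2 * (f i * H k i) - β * fτ k)) =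
      t * (∑ k, f k * (∑ i, 2 * (f i * H k i)) - β * ∑ k, f k * fτ k) := by
    rw [Finset.mul_sum, ← Finset.sum_sub_distrib, Finset.mul_sum]
    refine Finset.sum_congr rfl fun k _ => ?_
    ring
  have Dd : ∑ i, 2 * (f i * fτ i) = 2 * ∑ k, f k * fτ k := by rw [Finset.mul_sum]
  rw [A, C, h2, Dd]
  have E : (∑ k, f k * ∑ i, K k i) = (∑ k, f k * fτ k) - ∑ k, f k * ∑ i, 2 * (f i * H k i) := by
    rw [B]; ring
  rw [E]
  nlinarith [hQ]

end Slice

/-- The key evolution inequality of Lemma 2.1 in the static Euclidean case: for a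
positive solution `u` of the heat equation, `f = log u` and
`F = t(‖∇f‖² − β ∂f/∂t)`, one has, for all `a, b > 0` with `a + 2b = 1/β`,
`ΔF − ∂F/∂t ≥ −2⟨∇f, ∇F⟩ + (2aβt/n)(‖∇f‖² − ∂f/∂t)² − (‖∇f‖² − β ∂f/∂t)`. -/
theorem evolution_inequality_flat (n : ℕ) (hn : 1 ≤ n) (T β : ℝ) (hT : 0 < T)
    (hβ : 1 ≤ β) (u : EuclideanSpace ℝ (Fin n) → ℝ → ℝ)
    (hu : ContDiff ℝ (⊤ : ℕ∞) (fun p : EuclideanSpace ℝ (Fin n) × ℝ => u p.1 p.2))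
    (hupos : ∀ x, ∀ t ∈ Set.Icc 0 T, 0 < u x t)
    (hheat : ∀ x, ∀ t ∈ Set.Icc 0 T,
      deriv (fun s => u x s) t = laplacian (fun y => u y t) x)
    (f : EuclideanSpace ℝ (Fin n) → ℝ → ℝ) (hf : f = fun x t => Real.log (u x t))
    (F : EuclideanSpace ℝ (Fin n) → ℝ → ℝ)
    (hF : F = fun x t => t * (‖gradient (fun y => f y t) x‖ ^ 2 -
      β * deriv (fun s => f x s) t)) :
    ∀ a b : ℝ, 0 < a → 0 < b → a + 2 * b = 1 / β →
      ∀ x, ∀ t ∈ Set.Ioc 0 T,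
        laplacian (fun y => F y t) x - deriv (fun s => F x s) t ≥
          -2 * ⟪gradient (fun y => f y t) x, gradient (fun y => F y t) x⟫ +
            (2 * a * β * t / n) *
              (‖gradient (fun y => f y t) x‖ ^ 2 - deriv (fun s => f x s) t) ^ 2 -
            (‖gradient (fun y => f y t) x‖ ^ 2 - β * deriv (fun s => f x s) t) := by
  intro a b ha hb hab x t ht
  have ht0 : t ∈ Set.Icc 0 T := ⟨ht.1.le, ht.2⟩
  set w : EuclideanSpace ℝ (Fin n) × ℝ → ℝ := fun p => u p.1 p.2 with hw
  set U : Set (EuclideanSpace ℝ (Fin n) × ℝ) := {p | 0 < w p} with hUdef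
  have hU : IsOpen U := isOpen_lt continuous_const hu.continuous
  have hmem : ∀ y, ∀ s ∈ Set.Icc 0 T, (y, s) ∈ U := fun y s hs => hupos y s hs
  have hwU : ContDiffOn ℝ (⊤ : ℕ∞) w U := hu.contDiffOn
  set g : EuclideanSpace ℝ (Fin n) × ℝ → ℝ := fun p => Real.log (w p) with hg
  have gU : ContDiffOn ℝ (⊤ : ℕ∞) g U := hwU.log fun p hp => ne_of_gt hp
  have hfg : ∀ y s, f y s = g (y, s) := fun y s => by rw [hf]
  have hp : (x, t) ∈ U := hmem x t ht0
  have S1 : ∀ v, ContDiffOn ℝ (⊤ : ℕ∞) (dd v g) U := fun v => dd_smooth hU gU v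
  have S2 : ∀ v v', ContDiffOn ℝ (⊤ : ℕ∞) (dd v (dd v' g)) U := fun v v' => dd_smooth hU (S1 v') v
  -- derivative of log
  have L1 : ∀ v, ∀ p ∈ U, w p * dd v g p = dd v w p := by
    intro v p hp
    have hne : w p ≠ 0 := ne_of_gt hp
    simp only [dd, hg]
    rw [((diffAt hU hwU hp).hasFDerivAt.log hne).fderiv]
    simp
    field_simp
  have L2 : ∀ v, ∀ p ∈ U, dd v (dd v w) p =
      w p * (dd v (dd v g) p + dd v g p * dd v g p) := by
    intro v p hp
    rw [← dd_congr hU (L1 v) hp v, dd_mul (diffAt hU hwU hp) (diffAt hU (S1 v) hp), ← L1 v p hp]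
    ring
  -- the equation for g
  have G0 : ∀ y, ∀ s ∈ Set.Icc 0 T, dd tv g (y, s) =
      ∑ i, dd (ev i) (dd (ev i) g) (y, s) + ∑ i, dd (ev i) g (y, s) * dd (ev i) g (y, s) := by
    intro y s hs
    have hys := hmem y s hs
    have h := hheat y s hs
    have h1 : deriv (fun s => u y s) s = dd tv w (y, s) :=
      (slice_t (g := w) (diffAt hU hwU hys)).deriv
    have h2 : laplacian (fun y => u y s) y = ∑ i, dd (ev i) (dd (ev i) w) (y, s) :=
      slice_lap (g := w) hU hwU (fun y => hmem y s hs) y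
    rw [h1, h2, ← L1 _ _ hys] at h
    simp only [L2 _ _ hys] at h
    rw [← Finset.mul_sum] at h
    rw [← Finset.sum_add_distrib]
    exact mul_left_cancel₀ (ne_of_gt hys) h
  set R : EuclideanSpace ℝ (Fin n) × ℝ → ℝ := fun p =>
    dd tv g p - (∑ i, (dd (ev i) (dd (ev i) g) p + dd (ev i) g p * dd (ev i) g p)) with hR
  have RU : ContDiffOn ℝ (⊤ : ℕ∞) R U :=
    (S1 _).sub (ContDiffOn.sum fun i _ => (S2 _ _).add ((S1 _).mul (S1 _)))
  have R0 : ∀ y, ∀ s ∈ Set.Icc 0 T, R (y, s) = 0 := by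
    intro y s hs
    simp only [hR]
    rw [G0 y s hs, Finset.sum_add_distrib]
    ring
  have Rx : ∀ k, dd (ev k) R (x, t) = 0 := by
    intro k
    rw [← slice_x (diffAt hU RU hp)]
    have : (fun y => R (y, t)) = fun _ => 0 := funext fun y => R0 y t ht0
    rw [this]
    simp
  have Rt : dd tv R (x, t) = 0 := by
    have h1 := (slice_t (diffAt hU RU hp)).hasDerivWithinAt (s := Set.Icc 0 T)
    have h2 : HasDerivWithinAt (fun s => R (x, s)) 0 (Set.Icc 0 T) t :=
      (hasDerivWithinAt_const t (Set.Icc 0 T) (0 : ℝ)).congr (fun s hs => R0 x s hs) (R0 x t ht0)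
    exact (uniqueDiffOn_Icc hT t ht0).eq_deriv _ h1 h2
  have DR : ∀ v, dd v R (x, t) = dd v (dd tv g) (x, t) -
      ∑ i, (dd v (dd (ev i) (dd (ev i) g)) (x, t) +
        2 * (dd (ev i) g (x, t) * dd v (dd (ev i) g) (x, t))) := by
    intro v
    have d1 : ∀ i, DifferentiableAt ℝ (fun p => dd (ev i) g p * dd (ev i) g p) (x, t) :=
      fun i => (diffAt hU (S1 (ev i)) hp).mul (diffAt hU (S1 (ev i)) hp)
    have d2 : ∀ i, DifferentiableAt ℝ (dd (ev i) (dd (ev i) g)) (x, t) :=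
      fun i => diffAt hU (S2 (ev i) (ev i)) hp
    have d3 : ∀ i, DifferentiableAt ℝ
      (fun p => dd (ev i) (dd (ev i) g) p + dd (ev i) g p * dd (ev i) g p) (x, t) :=
      fun i => (d2 i).add (d1 i)
    simp only [hR]
    rw [dd_sub (diffAt hU (S1 tv) hp) (DifferentiableAt.fun_sum fun i _ => d3 i), dd_sum d3]
    congr 1
    refine Finset.sum_congr rfl fun i _ => ?_
    have : dd v (fun p => dd (ev i) (dd (ev i) g) p + dd (ev i) g p * dd (ev i) g p) (x, t) =
        dd v (dd (ev i) (dd (ev i) g)) (x, t) +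
          dd v (fun p => dd (ev i) g p * dd (ev i) g p) (x, t) := by
      unfold dd at d1 d2 ⊢
      rw [((d2 i).hasFDerivAt.fun_add (d1 i).hasFDerivAt).fderiv]
      simp
    rw [this, dd_mul (diffAt hU (S1 (ev i)) hp) (diffAt hU (S1 (ev i)) hp)]
    ring
  -- the function F
  set P : EuclideanSpace ℝ (Fin n) × ℝ → ℝ := fun p =>
    ∑ i, dd (ev i) g p * dd (ev i) g p - β * dd tv g p with hP
  have PU : ContDiffOn ℝ (⊤ : ℕ∞) P U :=
    (ContDiffOn.sum fun i _ => (S1 _).mul (S1 _)).sub (contDiffOn_const.mul (S1 _))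
  set Q : EuclideanSpace ℝ (Fin n) × ℝ → ℝ := fun p => p.2 * P p with hQ
  have QU : ContDiffOn ℝ (⊤ : ℕ∞) Q U := contDiff_snd.contDiffOn.mul PU
  have gradf : ∀ y s, (y, s) ∈ U → ‖gradient (fun z => f z s) y‖ ^ 2 =
      ∑ i, dd (ev i) g (y, s) * dd (ev i) g (y, s) := by
    intro y s hys
    rw [← real_inner_self_eq_norm_sq, inner_grad]
    simp only [hfg]
    refine Finset.sum_congr rfl fun i _ => ?_
    rw [slice_x (diffAt hU gU hys)]
  have dft : ∀ y s, (y, s) ∈ U → deriv (fun r => f y r) s = dd tv g (y, s) := by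
    intro y s hys
    simp only [hfg]
    exact (slice_t (diffAt hU gU hys)).deriv
  have hFQ : ∀ y s, (y, s) ∈ U → F y s = Q (y, s) := by
    intro y s hys
    rw [hF]
    simp only [hQ, hP]
    rw [gradf y s hys, dft y s hys]
  have hFx : (fun y => F y t) = fun y => Q (y, t) := funext fun y => hFQ y t (hmem y t ht0)
  have hFt : deriv (fun s => F x s) t = dd tv Q (x, t) := by
    rw [← (slice_t (diffAt hU QU hp)).deriv]
    apply Filter.EventuallyEq.deriv_eq
    have hc : ContinuousAt (fun s : ℝ => (x, s)) t := by fun_prop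
    filter_upwards [hc.preimage_mem_nhds (hU.mem_nhds hp)] with s hs
    exact hFQ x s hs
  have DP : ∀ v, ∀ p ∈ U, dd v P p =
      ∑ i, 2 * (dd (ev i) g p * dd v (dd (ev i) g) p) - β * dd v (dd tv g) p := by
    intro v p hp
    have d1 : ∀ i, DifferentiableAt ℝ (fun p => dd (ev i) g p * dd (ev i) g p) p :=
      fun i => (diffAt hU (S1 (ev i)) hp).mul (diffAt hU (S1 (ev i)) hp)
    simp only [hP]
    rw [dd_sub (DifferentiableAt.fun_sum fun i _ => d1 i)
      ((diffAt hU (S1 tv) hp).const_mul β), dd_sum d1, dd_cmul (diffAt hU (S1 tv) hp)]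
    congr 1
    refine Finset.sum_congr rfl fun i _ => ?_
    rw [dd_mul (diffAt hU (S1 (ev i)) hp) (diffAt hU (S1 (ev i)) hp)]
    ring
  have sym3 : ∀ v v', dd v (dd v (dd v' g)) (x, t) = dd v' (dd v (dd v g)) (x, t) := by
    intro v v'
    rw [dd_congr hU (fun p hp => dd_symm hU gU hp v v') hp v, dd_symm hU (S1 v) hp]
  have dtv : ∀ i, dd tv (dd (ev i) g) (x, t) = dd (ev i) (dd tv g) (x, t) :=
    fun i => dd_symm hU gU hp _ _
  have DDP : ∀ v, dd v (dd v P) (x, t) =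
      ∑ i, 2 * (dd v (dd (ev i) g) (x, t) * dd v (dd (ev i) g) (x, t) +
        dd (ev i) g (x, t) * dd (ev i) (dd v (dd v g)) (x, t)) -
        β * dd v (dd v (dd tv g)) (x, t) := by
    intro v
    rw [dd_congr hU (DP v) hp v]
    have d0 : ∀ i, DifferentiableAt ℝ
        (fun p => dd (ev i) g p * dd v (dd (ev i) g) p) (x, t) :=
      fun i => (diffAt hU (S1 (ev i)) hp).mul (diffAt hU (S2 v (ev i)) hp)
    have d1 : ∀ i, DifferentiableAt ℝ
        (fun p => 2 * (dd (ev i) g p * dd v (dd (ev i) g) p)) (x, t) :=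
      fun i => (d0 i).const_mul 2
    rw [dd_sub (DifferentiableAt.fun_sum fun i _ => d1 i)
      ((diffAt hU (S2 v tv) hp).const_mul β), dd_sum d1, dd_cmul (diffAt hU (S2 v tv) hp)]
    congr 1
    refine Finset.sum_congr rfl fun i _ => ?_
    rw [dd_cmul (d0 i), dd_mul (diffAt hU (S1 (ev i)) hp) (diffAt hU (S2 v (ev i)) hp),
      sym3 v (ev i)]
  have DQ : ∀ v, ∀ p ∈ U, dd v Q p = v.2 * P p + p.2 * dd v P p := by
    intro v p hp
    simp only [hQ]
    rw [dd_mul differentiableAt_snd (diffAt hU PU hp)]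
    congr 2
    simp [dd, fderiv_snd]
  have DQx : ∀ k, ∀ p ∈ U, dd (ev k) Q p = p.2 * dd (ev k) P p := by
    intro k p hp
    rw [DQ _ p hp]
    simp [ev]
  have DDQ : ∀ k, dd (ev k) (dd (ev k) Q) (x, t) = t * dd (ev k) (dd (ev k) P) (x, t) := by
    intro k
    rw [dd_congr hU (DQx k) hp,
      dd_mul differentiableAt_snd (diffAt hU (dd_smooth hU PU _) hp)]
    simp [dd, fderiv_snd, ev]
  have main := final_ineq hn β a b t (dd tv g (x, t)) (dd tv (dd tv g) (x, t)) hβ hb ht.1 hab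
    (fun i => dd (ev i) g (x, t)) (fun i => dd (ev i) (dd tv g) (x, t))
    (fun i => dd (ev i) (dd (ev i) (dd tv g)) (x, t))
    (fun k i => dd (ev k) (dd (ev i) g) (x, t))
    (fun k i => dd (ev k) (dd (ev i) (dd (ev i) g)) (x, t))
    (G0 x t ht0)
    (by
      intro k
      have h1 := Rx k
      rw [DR, Finset.sum_add_distrib] at h1
      linarith)
    (by
      have h1 := Rt
      rw [DR, Finset.sum_add_distrib] at h1
      rw [Finset.sum_congr rfl fun i _ => sym3 (ev i) tv]
      simp only [dtv] at h1
      linarith)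
  rw [gradf x t hp, dft x t hp, hFt, hFx, slice_lap hU QU (fun y => hmem y t ht0) x, inner_grad]
  have e1 : ∀ i, fderiv ℝ (fun y => f y t) x (EuclideanSpace.single i 1) =
      dd (ev i) g (x, t) := by
    intro i
    simp only [hfg]
    exact slice_x (diffAt hU gU hp) i
  have e2 : ∀ i, fderiv ℝ (fun y => Q (y, t)) x (EuclideanSpace.single i 1) =
      t * dd (ev i) P (x, t) := by
    intro i
    rw [slice_x (diffAt hU QU hp) i, DQx i _ hp]
  have e3 : dd tv Q (x, t) = P (x, t) + t * dd tv P (x, t) := by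
    rw [DQ _ _ hp]
    simp [tv]
  simp only [e1, e2, e3, DDQ, DDP, DP _ _ hp]
  simp only [hP]
  simp only [dtv]
  exact main
end

section
/- Let n ≥ 1. There exists a constant C′ > 0 depending only on n with the following property: for every T > 0, every smooth positive function u : ℝⁿ × [0,T] → (0,∞) satisfying the heat equation ∂u/∂t = Δu, every β > 1, every ρ > 0, every x₀ ∈ ℝⁿ, every x ∈ ℝⁿ with ‖x − x₀‖ < ρ/2, and every t ∈ (0,T], one has ‖∇u(x,t)‖²/u(x,t)² − β·(∂u/∂t)(x,t)/u(x,t) ≤ C′·β²·( β²/(ρ²(β−1)) + 1/t ). -/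
open scoped ContDiff Topology
open Set

section GenD
variable {V : Type*} [NormedAddCommGroup V] [NormedSpace ℝ V]

noncomputable def DD (v : V) (F : V → ℝ) (p : V) : ℝ := fderiv ℝ F p v

lemma DD_smooth {Ω : Set V} (hΩ : IsOpen Ω) {F : V → ℝ} (hF : ContDiffOn ℝ ∞ F Ω) (v : V) :
    ContDiffOn ℝ ∞ (DD v F) Ω := by
  have h := hF.fderiv_of_isOpen (m := ∞) hΩ (by simp)
  exact h.clm_apply contDiffOn_const

lemma diffAt_of {Ω : Set V} (hΩ : IsOpen Ω) {F : V → ℝ} (hF : ContDiffOn ℝ ∞ F Ω) {p : V}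
    (hp : p ∈ Ω) : DifferentiableAt ℝ F p :=
  (hF.contDiffAt (hΩ.mem_nhds hp)).differentiableAt (by simp)

lemma DD_congr {Ω : Set V} (hΩ : IsOpen Ω) {F G : V → ℝ} (h : ∀ p ∈ Ω, F p = G p) (v : V) {p : V}
    (hp : p ∈ Ω) : DD v F p = DD v G p := by
  have : F =ᶠ[𝓝 p] G := Filter.eventuallyEq_of_mem (hΩ.mem_nhds hp) h
  rw [DD, DD, this.fderiv_eq]

lemma DD_mul {F G : V → ℝ} {p : V} (hF : DifferentiableAt ℝ F p) (hG : DifferentiableAt ℝ G p)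
    (v : V) : DD v (fun x => F x * G x) p = F p * DD v G p + DD v F p * G p := by
  have := (hF.hasFDerivAt.mul hG.hasFDerivAt).fderiv
  unfold DD
  have h2 : (fun x => F x * G x) = F * G := rfl
  rw [h2, this]; simp; ring

lemma DD_add {F G : V → ℝ} {p : V} (hF : DifferentiableAt ℝ F p) (hG : DifferentiableAt ℝ G p)
    (v : V) : DD v (fun x => F x + G x) p = DD v F p + DD v G p := by
  unfold DD
  rw [fderiv_fun_add hF hG]; simp

lemma DD_sub {F G : V → ℝ} {p : V} (hF : DifferentiableAt ℝ F p) (hG : DifferentiableAt ℝ G p)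
    (v : V) : DD v (fun x => F x - G x) p = DD v F p - DD v G p := by
  unfold DD
  rw [fderiv_fun_sub hF hG]; simp

lemma DD_cmul {F : V → ℝ} {p : V} (hF : DifferentiableAt ℝ F p) (c : ℝ)
    (v : V) : DD v (fun x => c * F x) p = c * DD v F p := by
  unfold DD
  rw [fderiv_const_mul hF]; simp

lemma DD_sum {ι : Type*} (s : Finset ι) {F : ι → V → ℝ} {p : V}
    (hF : ∀ i ∈ s, DifferentiableAt ℝ (F i) p)
    (v : V) : DD v (fun x => ∑ i ∈ s, F i x) p = ∑ i ∈ s, DD v (F i) p := by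
  unfold DD
  rw [fderiv_fun_sum hF]; simp

lemma DD_comm {Ω : Set V} (hΩ : IsOpen Ω) {F : V → ℝ} (hF : ContDiffOn ℝ ∞ F Ω) (v w : V)
    {p : V} (hp : p ∈ Ω) : DD v (DD w F) p = DD w (DD v F) p := by
  have hc := hF.contDiffAt (hΩ.mem_nhds hp)
  have hs : IsSymmSndFDerivAt ℝ F p := hc.isSymmSndFDerivAt (by simp; exact WithTop.coe_le_coe.2 (le_top : (2 : ℕ∞) ≤ ⊤))
  have hd : DifferentiableAt ℝ (fderiv ℝ F) p :=
    ((hF.fderiv_of_isOpen (m := ∞) hΩ (by simp)).contDiffAt (hΩ.mem_nhds hp)).differentiableAt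
      (by simp)
  have key : ∀ a b : V, DD a (DD b F) p = fderiv ℝ (fderiv ℝ F) p a b := by
    intro a b
    unfold DD
    rw [fderiv_clm_apply hd (by simp)]
    simp
  rw [key, key]; exact hs v w

lemma DD_DD_mul {Ω : Set V} (hΩ : IsOpen Ω) {F G : V → ℝ} (hF : ContDiffOn ℝ ∞ F Ω)
    (hG : ContDiffOn ℝ ∞ G Ω) (v : V) {p : V} (hp : p ∈ Ω) :
    DD v (DD v (fun x => F x * G x)) p
      = F p * DD v (DD v G) p + 2 * DD v F p * DD v G p + DD v (DD v F) p * G p := by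
  have h1 : ∀ x ∈ Ω, DD v (fun x => F x * G x) x = F x * DD v G x + DD v F x * G x :=
    fun x hx => DD_mul (diffAt_of hΩ hF hx) (diffAt_of hΩ hG hx) v
  have dF := diffAt_of hΩ hF hp
  have dG := diffAt_of hΩ hG hp
  have dF' := diffAt_of hΩ (DD_smooth hΩ hF v) hp
  have dG' := diffAt_of hΩ (DD_smooth hΩ hG v) hp
  rw [DD_congr hΩ h1 v hp, DD_add (dF.fun_mul dG') (dF'.fun_mul dG), DD_mul dF dG', DD_mul dF' dG]
  ring

lemma hasDerivAt_line {F : V → ℝ} {p v : V} {r : ℝ} (h : DifferentiableAt ℝ F (p + r • v)) :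
    HasDerivAt (fun r : ℝ => F (p + r • v)) (DD v F (p + r • v)) r := by
  have h1 : HasDerivAt (fun r : ℝ => p + r • v) v r := by
    simpa using ((hasDerivAt_id r).smul_const v).const_add p
  exact h.hasFDerivAt.comp_hasDerivAt r h1

lemma DD_max {Ω : Set V} (hΩ : IsOpen Ω) {F : V → ℝ} (hF : ContDiffOn ℝ ∞ F Ω) {p v : V}
    (hp : p ∈ Ω) (hm : ∀ᶠ r in 𝓝 (0:ℝ), F (p + r • v) ≤ F p) :
    DD v F p = 0 ∧ DD v (DD v F) p ≤ 0 := by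
  have hc : ContinuousAt (fun r : ℝ => p + r • v) 0 := by fun_prop
  have hev : ∀ᶠ r in 𝓝 (0:ℝ), p + r • v ∈ Ω := hc.eventually_mem (hΩ.mem_nhds (by simpa using hp))
  have hd : ∀ᶠ r in 𝓝 (0:ℝ),
      HasDerivAt (fun r : ℝ => F (p + r • v)) (DD v F (p + r • v)) r :=
    hev.mono fun r hr => hasDerivAt_line (diffAt_of hΩ hF hr)
  have hmax : IsLocalMax (fun r : ℝ => F (p + r • v)) 0 := by
    simpa [IsLocalMax, IsMaxFilter] using hm
  have h1 : DD v F p = 0 := by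
    have := hmax.hasDerivAt_eq_zero hd.self_of_nhds
    simpa using this
  refine ⟨h1, ?_⟩
  have hd' : deriv (fun r : ℝ => F (p + r • v)) =ᶠ[𝓝 0] fun r => DD v F (p + r • v) :=
    hd.mono fun r hr => hr.deriv
  have h2 : deriv (deriv (fun r : ℝ => F (p + r • v))) 0 = DD v (DD v F) p := by
    rw [hd'.deriv_eq]
    have := (hasDerivAt_line (F := DD v F) (p := p) (v := v) (r := 0)
      (diffAt_of hΩ (DD_smooth hΩ hF v) (by simpa using hp))).deriv
    simpa using this
  by_contra hcon
  push Not at hcon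
  have hmin : IsLocalMin (fun r : ℝ => F (p + r • v)) 0 := by
    apply isLocalMin_of_deriv_deriv_pos (by rw [h2]; exact hcon)
    · rw [hd.self_of_nhds.deriv]; simpa using h1
    · exact hd.self_of_nhds.continuousAt
  have hconst : (fun r : ℝ => F (p + r • v)) =ᶠ[𝓝 0] fun _ => F p := by
    filter_upwards [hmax, hmin] with r a b
    simp at a b
    exact le_antisymm a b
  have : deriv (deriv (fun r : ℝ => F (p + r • v))) 0 = 0 := by
    rw [hconst.deriv.deriv_eq]; simp
  rw [h2] at this
  linarith

lemma DD_max_left {F : V → ℝ} {p v : V} {s : ℝ} (hs : 0 < s) (hF : DifferentiableAt ℝ F p)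
    (hm : ∀ r ∈ Icc (-s) 0, F (p + r • v) ≤ F p) : 0 ≤ DD v F p := by
  have h := hasDerivAt_line (F := F) (p := p) (v := v) (r := 0) (by simpa using hF)
  have h2 := (hasDerivAt_iff_tendsto_slope.1 h).mono_left (nhdsLT_le_nhdsNE 0)
  simp only [zero_smul, add_zero] at h2
  refine ge_of_tendsto h2 ?_
  have : Ioo (-s) 0 ∈ 𝓝[<] (0:ℝ) := Ioo_mem_nhdsLT (by linarith)
  filter_upwards [this] with r hr
  have := hm r ⟨hr.1.le, hr.2.le⟩
  simp only [slope_def_field, zero_smul, add_zero, sub_zero]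
  exact div_nonneg_of_nonpos (by linarith) hr.2.le

lemma DD_log {F : V → ℝ} {p : V} (v : V) (hF : DifferentiableAt ℝ F p) (h0 : F p ≠ 0) :
    DD v (fun x => Real.log (F x)) p = DD v F p / F p := by
  unfold DD
  rw [fderiv.log hF h0]; simp; field_simp

section Boch
variable {ι : Type*} [Fintype ι] {Ω : Set V} {f : V → ℝ} {e : ι → V} {τ : V}

lemma DD3_comm (hΩ : IsOpen Ω) (hf : ContDiffOn ℝ ∞ f Ω) (v w : V) {p : V} (hp : p ∈ Ω) :
    DD v (DD w (DD w f)) p = DD w (DD w (DD v f)) p := by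
  rw [DD_comm hΩ (DD_smooth hΩ hf w) v w hp]
  exact DD_congr hΩ (fun x hx => DD_comm hΩ hf v w hx) w hp

lemma bochner (hΩ : IsOpen Ω) (hf : ContDiffOn ℝ ∞ f Ω) (β : ℝ)
    (heat : ∀ p ∈ Ω, DD τ f p = ∑ i, DD (e i) (DD (e i) f) p + ∑ i, DD (e i) f p * DD (e i) f p)
    {q : V → ℝ} (hq : q = fun p => ∑ i, DD (e i) f p * DD (e i) f p - β * DD τ f p)
    {p : V} (hp : p ∈ Ω) :
    ∑ j, DD (e j) (DD (e j) q) p - DD τ q p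
      = 2 * ∑ j, ∑ i, (DD (e j) (DD (e i) f) p) ^ 2 - 2 * ∑ i, DD (e i) f p * DD (e i) q p := by
  set y : V → ℝ := fun p => ∑ i, DD (e i) f p * DD (e i) f p with hy
  have sF : ∀ v, ContDiffOn ℝ ∞ (DD v f) Ω := DD_smooth hΩ hf
  have sFF : ∀ v w, ContDiffOn ℝ ∞ (DD v (DD w f)) Ω := fun v w => DD_smooth hΩ (sF w) v
  have sm : ∀ i, ContDiffOn ℝ ∞ (fun p => DD (e i) f p * DD (e i) f p) Ω :=
    fun i => (sF _).mul (sF _)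
  have sy : ContDiffOn ℝ ∞ y Ω := ContDiffOn.sum fun i _ => sm i
  have Dy : ∀ v, ∀ x ∈ Ω, DD v y x = ∑ i, DD v (fun p => DD (e i) f p * DD (e i) f p) x :=
    fun v x hx => DD_sum _ (fun i _ => diffAt_of hΩ (sm i) hx) v
  have Dy' : ∀ v, DD v y p = 2 * ∑ i, DD (e i) f p * DD v (DD (e i) f) p := by
    intro v
    rw [Dy v p hp, Finset.mul_sum]
    refine Finset.sum_congr rfl fun i _ => ?_
    rw [DD_mul (diffAt_of hΩ (sF _) hp) (diffAt_of hΩ (sF _) hp)]; ring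
  have DDy : ∀ v, DD v (DD v y) p
      = 2 * ∑ i, DD (e i) f p * DD v (DD v (DD (e i) f)) p + 2 * ∑ i, (DD v (DD (e i) f) p)^2 := by
    intro v
    rw [DD_congr hΩ (Dy v) v hp,
      DD_sum _ (fun i _ => diffAt_of hΩ (DD_smooth hΩ (sm i) v) hp), Finset.mul_sum,
      Finset.mul_sum, ← Finset.sum_add_distrib]
    refine Finset.sum_congr rfl fun i _ => ?_
    rw [DD_DD_mul hΩ (sF _) (sF _) v hp]; ring
  have Dq : ∀ v, ∀ x ∈ Ω, DD v q x = DD v y x - β * DD v (DD τ f) x := by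
    intro v x hx
    rw [hq, DD_sub (diffAt_of hΩ sy hx) ((diffAt_of hΩ (sF τ) hx).const_mul β),
      DD_cmul (diffAt_of hΩ (sF τ) hx)]
  have DDq : ∀ v, DD v (DD v q) p = DD v (DD v y) p - β * DD v (DD v (DD τ f)) p := by
    intro v
    rw [DD_congr hΩ (Dq v) v hp, DD_sub (diffAt_of hΩ (DD_smooth hΩ sy v) hp)
      ((diffAt_of hΩ (sFF v τ) hp).const_mul β), DD_cmul (diffAt_of hΩ (sFF v τ) hp)]
  have Dheat : ∀ v, ∑ j, DD (e j) (DD (e j) (DD v f)) p = DD v (DD τ f) p - DD v y p := by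
    intro v
    have h : DD v (DD τ f) p = DD v (fun x => ∑ i, DD (e i) (DD (e i) f) x + y x) p :=
      DD_congr hΩ heat v hp
    rw [DD_add (diffAt_of hΩ (ContDiffOn.sum fun i _ => sFF (e i) (e i)) hp)
      (diffAt_of hΩ sy hp), DD_sum _ (fun i _ => diffAt_of hΩ (sFF (e i) (e i)) hp)] at h
    rw [h, add_sub_cancel_right]
    exact Finset.sum_congr rfl fun j _ => (DD3_comm hΩ hf v (e j) hp).symm
  have S1 : ∑ j, DD (e j) (DD (e j) y) p
      = 2 * ∑ i, DD (e i) f p * (DD (e i) (DD τ f) p - DD (e i) y p)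
        + 2 * ∑ j, ∑ i, (DD (e j) (DD (e i) f) p)^2 := by
    simp only [DDy, Finset.sum_add_distrib, ← Finset.mul_sum, ← Dheat]
    rw [Finset.sum_comm]
    simp only [Finset.mul_sum]
  have S2 : DD τ y p = 2 * ∑ i, DD (e i) f p * DD (e i) (DD τ f) p := by
    rw [Dy' τ]
    congr 1
    exact Finset.sum_congr rfl fun i _ => by rw [DD_comm hΩ hf τ (e i) hp]
  simp only [DDq, Dq _ p hp, Finset.sum_sub_distrib, ← Finset.mul_sum, S1, Dheat, mul_sub]
  simp only [mul_left_comm _ β, ← Finset.mul_sum, S2]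
  ring

lemma log_heat (hΩ : IsOpen Ω) {U : V → ℝ} (hU : ContDiffOn ℝ ∞ U Ω) (hpos : ∀ p ∈ Ω, 0 < U p)
    {p : V} (hp : p ∈ Ω) (heat : DD τ U p = ∑ i, DD (e i) (DD (e i) U) p) :
    DD τ (fun x => Real.log (U x)) p
      = ∑ i, DD (e i) (DD (e i) (fun x => Real.log (U x))) p
        + ∑ i, DD (e i) (fun x => Real.log (U x)) p * DD (e i) (fun x => Real.log (U x)) p := by
  set f := fun x => Real.log (U x) with hf'
  have hf : ContDiffOn ℝ ∞ f Ω := hU.log fun x hx => (hpos x hx).ne'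
  have h1 : ∀ v, ∀ x ∈ Ω, DD v U x = U x * DD v f x := by
    intro v x hx
    rw [hf', DD_log v (diffAt_of hΩ hU hx) (hpos x hx).ne']
    have := (hpos x hx).ne'
    field_simp
  have h2 : ∀ v, DD v (DD v U) p = U p * (DD v (DD v f) p + DD v f p * DD v f p) := by
    intro v
    rw [DD_congr hΩ (h1 v) v hp, DD_mul (diffAt_of hΩ hU hp) (diffAt_of hΩ (DD_smooth hΩ hf v) hp),
      h1 v p hp]; ring
  simp only [h2, h1 τ p hp, ← Finset.mul_sum] at heat
  rw [← Finset.sum_add_distrib]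
  exact mul_left_cancel₀ (hpos p hp).ne' heat
end Boch

end GenD

set_option maxHeartbeats 1000000 in
lemma alg_key {n : ℕ} (hn : 1 ≤ n) (a c g : Fin n → ℝ) (h : Fin n → Fin n → ℝ)
    (s ψ q qτ Lq β ρ ft : ℝ) (hs : 0 < s) (hψ : 0 < ψ) (hψ1 : ψ ≤ 1) (hq : 0 < q) (hβ : 1 < β)
    (hρ : 0 < ρ)
    (hc : ∑ i, c i ^ 2 ≤ 4 / ρ ^ 2)
    (hqd : q = ∑ i, a i * a i - β * ft)
    (hft : ft = ∑ i, h i i + ∑ i, a i * a i)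
    (hg : ∀ i, s * ψ ^ 2 * g i + 2 * s * ψ * c i * q = 0)
    (hL : s * ψ ^ 2 * Lq + ∑ i, 2 * (2 * s * ψ * c i) * g i
      + s * (2 * ψ * (-(2 * n / ρ ^ 2)) + 2 * ∑ i, c i ^ 2) * q ≤ 0)
    (ht : 0 ≤ s * ψ ^ 2 * qτ + ψ ^ 2 * q)
    (hB : Lq - qτ = 2 * ∑ j, ∑ i, h j i ^ 2 - 2 * ∑ i, a i * g i) :
    s * ψ ^ 2 * q ≤ n * β ^ 2 / 2 * ((8 * n + 24) * (β ^ 2 / (ρ ^ 2 * (β - 1))) * s + 1) := by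
  have hn0 : (0:ℝ) < n := by exact_mod_cast hn
  have hg' : ∀ i, ψ * g i = -2 * c i * q := by
    intro i
    have : s * ψ * (ψ * g i) = s * ψ * (-2 * c i * q) := by linear_combination hg i
    exact mul_left_cancel₀ (by positivity) this
  set y := ∑ i, a i * a i with hy
  set C2 := ∑ i, c i ^ 2 with hC2
  have e1 : ∑ i, 2 * (2 * s * ψ * c i) * g i = -8 * s * q * C2 := by
    rw [hC2, Finset.mul_sum]
    refine Finset.sum_congr rfl fun i _ => ?_
    linear_combination 4 * s * c i * hg' i
  have e2 : ψ * ∑ i, a i * g i = -2 * q * ∑ i, a i * c i := by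
    rw [Finset.mul_sum, Finset.mul_sum]
    refine Finset.sum_congr rfl fun i _ => ?_
    linear_combination a i * hg' i
  set lam := 4 * (β - 1) / (n * β ^ 2) with hlam
  have hβ1 : 0 < β - 1 := by linarith
  have hlam0 : 0 < lam := by positivity
  have e3 : -(lam * ψ ^ 2 * y) - 4 / lam * C2 ≤ 4 * ψ * ∑ i, a i * c i := by
    rw [hy, hC2, Finset.mul_sum, Finset.mul_sum, Finset.mul_sum, ← Finset.sum_neg_distrib,
      ← Finset.sum_sub_distrib]
    refine Finset.sum_le_sum fun i _ => ?_
    have : 0 ≤ (lam * ψ * a i + 2 * c i) ^ 2 / lam := by positivity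
    have e : (lam * ψ * a i + 2 * c i) ^ 2 / lam
      = lam * ψ ^ 2 * (a i * a i) + 4 * ψ * (a i * c i) + 4 / lam * c i ^ 2 := by
      field_simp; ring
    linarith
  have e4 : (∑ i, h i i) ^ 2 ≤ n * ∑ j, ∑ i, h j i ^ 2 := by
    have h1 := sq_sum_le_card_mul_sum_sq (s := (Finset.univ : Finset (Fin n))) (f := fun i => h i i)
    simp only [Finset.card_univ, Fintype.card_fin] at h1
    refine h1.trans (mul_le_mul_of_nonneg_left (Finset.sum_le_sum fun j _ => ?_) hn0.le)
    exact Finset.single_le_sum (f := fun i => h j i ^ 2) (fun i _ => sq_nonneg _) (Finset.mem_univ j)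
  have hy0 : 0 ≤ y := Finset.sum_nonneg fun i _ => mul_self_nonneg _
  set N := ∑ j, ∑ i, h j i ^ 2
  have e5 : β * (∑ i, h i i) = -(q + (β - 1) * y) := by rw [hqd, hft]; ring
  have e6 : q * (q + 2 * (β - 1) * y) ≤ n * β ^ 2 * N := by
    have : (β * (∑ i, h i i)) ^ 2 ≤ n * β ^ 2 * N := by
      rw [mul_pow]; nlinarith [mul_le_mul_of_nonneg_left e4 (sq_nonneg β)]
    rw [e5] at this
    nlinarith [sq_nonneg ((β - 1) * y)]
  have e6' : 2 / (n * β ^ 2) * (q * (q + 2 * (β - 1) * y)) ≤ 2 * N := by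
    have := mul_le_mul_of_nonneg_left e6 (by positivity : 0 ≤ 2 / (n * β ^ 2))
    refine this.trans (le_of_eq ?_)
    field_simp
  rw [e1] at hL
  -- main inequality
  have m1 : s * ψ ^ 2 * (2 * N) + 4 * s * ψ * q * (∑ i, a i * c i) - 6 * s * q * C2
      - 4 * n * s * ψ * q / ρ ^ 2 - ψ ^ 2 * q ≤ 0 := by
    have : s * ψ ^ 2 * (Lq - qτ) = s * ψ ^ 2 * (2 * N) + 4 * s * ψ * q * (∑ i, a i * c i) := by
      rw [hB]; linear_combination (-2 * s * ψ) * e2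
    have e : 4 * n * s * ψ * q / ρ ^ 2 = - (s * (2 * ψ * (-(2 * n / ρ ^ 2))) * q) := by ring
    rw [e]
    linarith
  have m2 : q * (s * ψ ^ 2 * (2 / (n * β ^ 2) * (q + 2 * (β - 1) * y))
      + s * (-(lam * ψ ^ 2 * y) - 4 / lam * C2) - 6 * s * C2 - 4 * n * s * ψ / ρ ^ 2 - ψ ^ 2) ≤ 0 := by
    have i1 := mul_le_mul_of_nonneg_left e6' (by positivity : 0 ≤ s * ψ ^ 2)
    have i2 := mul_le_mul_of_nonneg_left e3 (by positivity : 0 ≤ s * q)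
    calc _ = s * ψ ^ 2 * (2 / (n * β ^ 2) * (q * (q + 2 * (β - 1) * y)))
          + s * q * (-(lam * ψ ^ 2 * y) - 4 / lam * C2) - 6 * s * q * C2
          - 4 * n * s * ψ * q / ρ ^ 2 - ψ ^ 2 * q := by ring
      _ ≤ _ := by linarith
  have m3 := nonpos_of_mul_nonpos_right m2 hq
  set B := β ^ 2 / (ρ ^ 2 * (β - 1)) with hB'
  have hBρ : 1 / ρ ^ 2 ≤ B := by
    rw [hB', div_le_div_iff₀ (by positivity) (by positivity)]
    have h1 : β - 1 ≤ β ^ 2 := by nlinarith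
    have := mul_le_mul_of_nonneg_left h1 (sq_nonneg ρ)
    linarith
  have k1 : 4 / lam * C2 ≤ 4 * n * B := by
    refine (mul_le_mul_of_nonneg_left hc (by positivity)).trans (le_of_eq ?_)
    rw [hlam, hB']; field_simp
  have k2 : C2 ≤ 4 * B := hc.trans (by rw [div_eq_mul_one_div]; linarith)
  have k3 : 4 * n * s * ψ / ρ ^ 2 ≤ 4 * n * s * B := by
    calc 4 * n * s * ψ / ρ ^ 2 = 4 * n * s * (ψ * (1 / ρ ^ 2)) := by ring
      _ ≤ 4 * n * s * (1 * B) := by gcongr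
      _ = _ := by ring
  have k4 : s * ψ ^ 2 * (2 / (n * β ^ 2) * (q + 2 * (β - 1) * y)) + s * (-(lam * ψ ^ 2 * y))
      = 2 / (n * β ^ 2) * (s * ψ ^ 2 * q) := by
    rw [hlam]; field_simp; ring
  have k5 : ψ ^ 2 ≤ 1 := pow_le_one₀ hψ.le hψ1
  have k6 : 2 / (n * β ^ 2) * (s * ψ ^ 2 * q) ≤ (8 * n + 24) * B * s + 1 := by
    have := mul_le_mul_of_nonneg_left k1 hs.le
    have := mul_le_mul_of_nonneg_left k2 hs.le
    linarith
  calc s * ψ ^ 2 * q = n * β ^ 2 / 2 * (2 / (n * β ^ 2) * (s * ψ ^ 2 * q)) := by field_simp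
    _ ≤ _ := mul_le_mul_of_nonneg_left k6 (by positivity)

section Main
variable {n : ℕ}
local notation "EE" n => EuclideanSpace ℝ (Fin n)

noncomputable def ee (i : Fin n) : (EE n) × ℝ := (EuclideanSpace.single i 1, 0)

lemma DD_const' {V : Type*} [NormedAddCommGroup V] [NormedSpace ℝ V] (v : V) (c : ℝ) (p : V) :
    DD v (fun _ => c) p = 0 := by simp [DD]

lemma DD_coord (x₀ : EE n) (j : Fin n) (v p : (EE n) × ℝ) :
    DD v (fun p : (EE n) × ℝ => p.1 j - x₀ j) p = v.1 j := by
  have h : HasFDerivAt (fun p : (EE n) × ℝ => p.1 j - x₀ j)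
      ((EuclideanSpace.proj j : (EE n) →L[ℝ] ℝ).comp (ContinuousLinearMap.fst ℝ (EE n) ℝ)) p :=
    (ContinuousLinearMap.hasFDerivAt
      ((EuclideanSpace.proj j : (EE n) →L[ℝ] ℝ).comp (ContinuousLinearMap.fst ℝ (EE n) ℝ))).sub_const _
  rw [DD, h.fderiv]; simp

lemma DD_snd (v p : (EE n) × ℝ) : DD v (fun p : (EE n) × ℝ => p.2) p = v.2 := by
  have h : HasFDerivAt (fun p : (EE n) × ℝ => p.2) (ContinuousLinearMap.snd ℝ (EE n) ℝ) p :=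
    (ContinuousLinearMap.snd ℝ (EE n) ℝ).hasFDerivAt
  rw [DD, h.fderiv]; simp

noncomputable def psi (x₀ : EE n) (ρ : ℝ) (p : (EE n) × ℝ) : ℝ :=
  1 - 1 / ρ ^ 2 * ∑ j, (p.1 j - x₀ j) * (p.1 j - x₀ j)

lemma coord_smooth (x₀ : EE n) (j : Fin n) :
    ContDiff ℝ ∞ (fun p : (EE n) × ℝ => p.1 j - x₀ j) := by fun_prop

lemma psi_smooth (x₀ : EE n) (ρ : ℝ) : ContDiff ℝ ∞ (psi x₀ ρ) := by
  unfold psi; fun_prop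

lemma psi_eq (x₀ : EE n) (ρ : ℝ) (p : (EE n) × ℝ) :
    psi x₀ ρ p = 1 - ‖p.1 - x₀‖ ^ 2 / ρ ^ 2 := by
  rw [psi, EuclideanSpace.real_norm_sq_eq]
  simp [pow_two]; ring

lemma DD_psi (x₀ : EE n) (ρ : ℝ) (v p : (EE n) × ℝ) :
    DD v (psi x₀ ρ) p = -(2 / ρ ^ 2) * ∑ j, v.1 j * (p.1 j - x₀ j) := by
  have d : ∀ j, DifferentiableAt ℝ (fun p : (EE n) × ℝ => p.1 j - x₀ j) p := fun j =>
    (coord_smooth x₀ j).differentiable (by simp) p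
  have d2 : DifferentiableAt ℝ
    (fun p : (EE n) × ℝ => ∑ j, (p.1 j - x₀ j) * (p.1 j - x₀ j)) p :=
    DifferentiableAt.fun_sum fun j _ => (d j).fun_mul (d j)
  have h : psi x₀ ρ = fun p : (EE n) × ℝ =>
    1 - 1 / ρ ^ 2 * ∑ j, (p.1 j - x₀ j) * (p.1 j - x₀ j) := rfl
  rw [h, DD_sub (differentiableAt_const _) (d2.const_mul _), DD_const', DD_cmul d2,
    DD_sum _ (fun j _ => (d j).fun_mul (d j))]
  simp only [DD_mul (d _) (d _), DD_coord, Finset.mul_sum]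
  rw [zero_sub, ← Finset.sum_neg_distrib]
  exact Finset.sum_congr rfl fun j _ => by ring

lemma DD_psi_e (x₀ : EE n) (ρ : ℝ) (i : Fin n) (p : (EE n) × ℝ) :
    DD (ee i) (psi x₀ ρ) p = -(2 / ρ ^ 2) * (p.1 i - x₀ i) := by
  rw [DD_psi]; simp [ee, Pi.single_apply]

lemma DD_DD_psi_e (x₀ : EE n) (ρ : ℝ) (i : Fin n) (p : (EE n) × ℝ) :
    DD (ee i) (DD (ee i) (psi x₀ ρ)) p = -(2 / ρ ^ 2) := by
  have : DD (ee i) (psi x₀ ρ) = fun p => -(2 / ρ ^ 2) * (p.1 i - x₀ i) :=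
    funext fun p => DD_psi_e x₀ ρ i p
  rw [this, DD_cmul ((coord_smooth x₀ i).differentiable (by simp) p), DD_coord]
  simp [ee]

lemma DD_psi_t (x₀ : EE n) (ρ : ℝ) (p : (EE n) × ℝ) :
    DD ((0, 1) : (EE n) × ℝ) (psi x₀ ρ) p = 0 := by
  rw [DD_psi]; simp

noncomputable def cut (x₀ : EE n) (ρ : ℝ) (p : (EE n) × ℝ) : ℝ :=
  p.2 * (psi x₀ ρ p * psi x₀ ρ p)

lemma cut_smooth (x₀ : EE n) (ρ : ℝ) : ContDiff ℝ ∞ (cut x₀ ρ) :=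
  contDiff_snd.mul ((psi_smooth x₀ ρ).mul (psi_smooth x₀ ρ))

lemma DD_cut (x₀ : EE n) (ρ : ℝ) (v p : (EE n) × ℝ) :
    DD v (cut x₀ ρ) p = p.2 * (2 * psi x₀ ρ p * DD v (psi x₀ ρ) p) + v.2 * psi x₀ ρ p ^ 2 := by
  have d := (psi_smooth x₀ ρ).differentiable (by simp) p
  have h : cut x₀ ρ = fun p : (EE n) × ℝ => p.2 * (psi x₀ ρ p * psi x₀ ρ p) := rfl
  rw [h, DD_mul differentiableAt_snd (d.fun_mul d), DD_mul d d, DD_snd]; ring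

lemma DD_cut_e (x₀ : EE n) (ρ : ℝ) (i : Fin n) (p : (EE n) × ℝ) :
    DD (ee i) (cut x₀ ρ) p = 2 * p.2 * psi x₀ ρ p * DD (ee i) (psi x₀ ρ) p := by
  rw [DD_cut]; simp [ee]; ring

lemma DD_DD_cut_e (x₀ : EE n) (ρ : ℝ) (i : Fin n) (p : (EE n) × ℝ) :
    DD (ee i) (DD (ee i) (cut x₀ ρ)) p
      = p.2 * (2 * psi x₀ ρ p * (-(2 / ρ ^ 2)) + 2 * DD (ee i) (psi x₀ ρ) p ^ 2) := by
  have s1 : ContDiffOn ℝ ∞ (psi x₀ ρ) univ := (psi_smooth x₀ ρ).contDiffOn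
  have s2 : ContDiffOn ℝ ∞ (fun p => psi x₀ ρ p * psi x₀ ρ p) univ := s1.mul s1
  have s3 : ContDiffOn ℝ ∞ (fun p : (EE n) × ℝ => p.2) univ := contDiff_snd.contDiffOn
  have h : cut x₀ ρ = fun p : (EE n) × ℝ => p.2 * (psi x₀ ρ p * psi x₀ ρ p) := rfl
  have h0 : DD (ee i) (fun p : (EE n) × ℝ => p.2) = fun _ => 0 := by
    funext p; rw [DD_snd]; rfl
  rw [h, DD_DD_mul isOpen_univ s3 s2 _ (mem_univ p), DD_DD_mul isOpen_univ s1 s1 _ (mem_univ p),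
    h0, DD_const', DD_DD_psi_e]; ring

noncomputable def qq (U : (EE n) × ℝ → ℝ) (β : ℝ) (p : (EE n) × ℝ) : ℝ :=
  ∑ i, DD (ee i) (fun x => Real.log (U x)) p * DD (ee i) (fun x => Real.log (U x)) p
    - β * DD (0, 1) (fun x => Real.log (U x)) p

lemma isOpen_pos {U : (EE n) × ℝ → ℝ} (hU : ContDiff ℝ ∞ U) : IsOpen {p | 0 < U p} :=
  isOpen_lt continuous_const hU.continuous

lemma log_smooth {U : (EE n) × ℝ → ℝ} (hU : ContDiff ℝ ∞ U) :
    ContDiffOn ℝ ∞ (fun x => Real.log (U x)) {p | 0 < U p} :=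
  hU.contDiffOn.log fun _ hx => ne_of_gt hx

lemma qq_smooth {U : (EE n) × ℝ → ℝ} (hU : ContDiff ℝ ∞ U) (β : ℝ) :
    ContDiffOn ℝ ∞ (qq U β) {p | 0 < U p} := by
  have hs := DD_smooth (isOpen_pos hU) (log_smooth hU)
  exact (ContDiffOn.sum fun i _ => (hs (ee i)).mul (hs (ee i))).sub (contDiffOn_const.mul (hs _))

lemma main_lt (hn : 1 ≤ n) {U : (EE n) × ℝ → ℝ} (hU : ContDiff ℝ ∞ U) {T : ℝ}
    (hpos : ∀ x, ∀ t ∈ Icc 0 T, 0 < U (x, t))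
    (heat : ∀ p : (EE n) × ℝ, p.2 ∈ Ioo 0 T → DD (0, 1) U p = ∑ i, DD (ee i) (DD (ee i) U) p)
    {β : ℝ} (hβ : 1 < β) {ρ : ℝ} (hρ : 0 < ρ) (x₀ x : EE n) (hx : ‖x - x₀‖ < ρ / 2)
    {t : ℝ} (ht : t ∈ Ioo 0 T) :
    qq U β (x, t) ≤ n * (8 * n + 24) * β ^ 2 * (β ^ 2 / (ρ ^ 2 * (β - 1)) + 1 / t) := by
  have hn0 : (0:ℝ) < n := by exact_mod_cast hn
  have hβ1 : 0 < β - 1 := by linarith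
  set B := β ^ 2 / (ρ ^ 2 * (β - 1)) with hB
  have hB0 : 0 < B := by positivity
  have ht0 : 0 < t := ht.1
  set q := qq U β with hq
  set H : (EE n) × ℝ → ℝ := fun p => cut x₀ ρ p * q p with hH
  set M := n * β ^ 2 / 2 * ((8 * n + 24) * B * t + 1) with hM
  have hM0 : 0 < M := by positivity
  set Ω : Set ((EE n) × ℝ) := {p | p.2 ∈ Ioo 0 T} with hΩd
  have hΩ : IsOpen Ω := isOpen_Ioo.preimage continuous_snd
  have hsub : Ω ⊆ {p | 0 < U p} := fun p hp => hpos p.1 p.2 ⟨hp.1.le, hp.2.le⟩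
  have sq : ContDiffOn ℝ ∞ q Ω := (qq_smooth hU β).mono hsub
  have sc : ContDiffOn ℝ ∞ (cut x₀ ρ) Ω := (cut_smooth x₀ ρ).contDiffOn
  have sH : ContDiffOn ℝ ∞ H Ω := sc.mul sq
  have sf : ContDiffOn ℝ ∞ (fun x => Real.log (U x)) Ω := (log_smooth hU).mono hsub
  set K : Set ((EE n) × ℝ) := Metric.closedBall x₀ ρ ×ˢ Icc 0 t with hK
  have hKc : IsCompact K := (isCompact_closedBall x₀ ρ).prod isCompact_Icc
  have hxK : (x, t) ∈ K := by
    refine ⟨?_, ht0.le, le_rfl⟩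
    simp only [Metric.mem_closedBall, dist_eq_norm]; linarith
  have hHc : ContinuousOn H K := by
    have hKs : K ⊆ {p | 0 < U p} := fun p hp => hpos p.1 p.2 ⟨hp.2.1, hp.2.2.trans ht.2.le⟩
    exact (cut_smooth x₀ ρ).continuous.continuousOn.mul ((qq_smooth hU β).continuousOn.mono hKs)
  obtain ⟨p, hpK, hpm⟩ := hKc.exists_isMaxOn ⟨_, hxK⟩ hHc
  have hmax : ∀ r ∈ K, H r ≤ H p := fun r hr => hpm hr
  have hHp : H p ≤ M := by
    by_contra hcon
    push Not at hcon
    have hHp0 : 0 < H p := hM0.trans hcon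
    have hnorm : ‖p.1 - x₀‖ ≤ ρ := by simpa [dist_eq_norm] using hpK.1
    have hHe : H p = p.2 * psi x₀ ρ p ^ 2 * q p := by simp only [hH, cut]; ring
    have hs0 : p.2 ≠ 0 := by
      intro h; rw [hHe, h] at hHp0; simp at hHp0
    have hs : 0 < p.2 := lt_of_le_of_ne hpK.2.1 hs0.symm
    have hψ0 : psi x₀ ρ p ≠ 0 := by
      intro h; rw [hHe, h] at hHp0; simp at hHp0
    have hψn : 0 ≤ psi x₀ ρ p := by
      rw [psi_eq, sub_nonneg, div_le_one (by positivity)]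
      exact pow_le_pow_left₀ (norm_nonneg _) hnorm 2
    have hψ : 0 < psi x₀ ρ p := lt_of_le_of_ne hψn hψ0.symm
    have hψ1 : psi x₀ ρ p ≤ 1 := by
      rw [psi_eq]; have : 0 ≤ ‖p.1 - x₀‖ ^ 2 / ρ ^ 2 := by positivity
      linarith
    have hnlt : ‖p.1 - x₀‖ < ρ := by
      refine lt_of_le_of_ne hnorm fun h => hψ0 ?_
      rw [psi_eq, h, div_self (by positivity), sub_self]
    have hqp : 0 < q p := by
      rw [hHe] at hHp0
      exact pos_of_mul_pos_right hHp0 (by positivity)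
    have hpΩ : p ∈ Ω := ⟨hs, hpK.2.2.trans_lt ht.2⟩
    have dq := diffAt_of hΩ sq hpΩ
    have dc := diffAt_of hΩ sc hpΩ
    have hspace : ∀ i, DD (ee i) H p = 0 ∧ DD (ee i) (DD (ee i) H) p ≤ 0 := by
      intro i
      apply DD_max hΩ sH hpΩ
      have hc : ContinuousAt (fun r : ℝ => (p + r • ee i).1) 0 := by fun_prop
      have hev := hc.eventually_mem (Metric.isOpen_ball.mem_nhds
        (show (p + (0:ℝ) • ee i).1 ∈ Metric.ball x₀ ρ by
          simpa [dist_eq_norm] using hnlt))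
      filter_upwards [hev] with r hr
      refine hmax _ ⟨Metric.ball_subset_closedBall hr, ?_⟩
      simpa [ee] using hpK.2
    have htime : 0 ≤ DD (0, 1) H p := by
      refine DD_max_left hs (diffAt_of hΩ sH hpΩ) fun r hr => hmax _ ⟨?_, ?_⟩
      · simpa using hpK.1
      · have := hpK.2.2
        simp only [Prod.snd_add, Prod.smul_snd, smul_eq_mul, mul_one, mem_Icc]
        constructor <;> linarith [hr.1, hr.2]
    have hlog : ∀ r ∈ Ω, _ := fun r hr => log_heat (τ := ((0, 1) : (EE n) × ℝ)) (e := ee) hΩ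
      hU.contDiffOn hsub hr (heat r hr)
    have hboch := bochner hΩ sf β hlog (q := q) rfl hpΩ
    have hkey := alg_key hn (fun i => DD (ee i) (fun x => Real.log (U x)) p)
      (fun i => DD (ee i) (psi x₀ ρ) p) (fun i => DD (ee i) q p)
      (fun j i => DD (ee j) (DD (ee i) (fun x => Real.log (U x))) p) p.2 (psi x₀ ρ p) (q p)
      (DD (0, 1) q p) (∑ j, DD (ee j) (DD (ee j) q) p) β ρ
      (DD (0, 1) (fun x => Real.log (U x)) p) hs hψ hψ1 hqp hβ hρ
      (by
        simp only [DD_psi_e, mul_pow, ← Finset.mul_sum]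
        have e : ∑ i, (p.1 i - x₀ i) ^ 2 = ‖p.1 - x₀‖ ^ 2 := by
          rw [EuclideanSpace.real_norm_sq_eq]; simp
        rw [e]
        have := pow_le_pow_left₀ (norm_nonneg _) hnorm 2
        calc (-(2 / ρ ^ 2)) ^ 2 * ‖p.1 - x₀‖ ^ 2 ≤ (-(2 / ρ ^ 2)) ^ 2 * ρ ^ 2 := by gcongr
          _ = 4 / ρ ^ 2 := by field_simp; norm_num)
      rfl (hlog p hpΩ)
      (by
        intro i
        have := (hspace i).1
        rw [hH, DD_mul dc dq, DD_cut_e] at this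
        rw [← this]; simp only [cut]; ring)
      (by
        have h1 : ∑ i, DD (ee i) (DD (ee i) H) p ≤ 0 :=
          Finset.sum_nonpos fun i _ => (hspace i).2
        refine le_trans (le_of_eq ?_) h1
        simp only [hH, DD_DD_mul hΩ sc sq _ hpΩ, DD_DD_cut_e, DD_cut_e, Finset.sum_add_distrib,
          ← Finset.mul_sum, ← Finset.sum_mul]
        simp only [cut, Finset.sum_const, Finset.card_univ, Fintype.card_fin, nsmul_eq_mul]
        simp only [Finset.mul_sum]
        ring)
      (by
        have := htime
        rw [hH, DD_mul dc dq, DD_cut, DD_psi_t] at this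
        refine le_trans this (le_of_eq ?_)
        simp only [cut]; ring)
      hboch
    rw [← hHe] at hkey
    have : n * β ^ 2 / 2 * ((8 * n + 24) * B * p.2 + 1) ≤ M := by
      rw [hM]; gcongr; exact hpK.2.2
    linarith
  have hfin : H (x, t) ≤ M := (hmax _ hxK).trans hHp
  have hψx : 3 / 4 ≤ psi x₀ ρ (x, t) := by
    rw [psi_eq]
    have h1 := pow_le_pow_left₀ (norm_nonneg _) hx.le 2
    have : ‖x - x₀‖ ^ 2 / ρ ^ 2 ≤ 1 / 4 := by
      rw [div_le_iff₀ (by positivity)]; linarith [h1, (by ring : (ρ/2)^2 = 1/4 * ρ^2)]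
    simp only; linarith
  by_cases hq0 : q (x, t) ≤ 0
  · exact hq0.trans (by positivity)
  push Not at hq0
  have h2 : (9:ℝ) / 16 ≤ psi x₀ ρ (x, t) ^ 2 := by nlinarith
  have h3 : t * (9 / 16) * q (x, t) ≤ M := by
    have : H (x, t) = t * psi x₀ ρ (x, t) ^ 2 * q (x, t) := by simp only [hH, cut]; ring
    rw [this] at hfin
    refine le_trans ?_ hfin
    gcongr
  have h4 : q (x, t) ≤ 16 / 9 * M / t := by
    rw [le_div_iff₀ ht0]; linarith
  refine h4.trans ?_
  have h5 : 16 / 9 * M / t = 8 / 9 * n * β ^ 2 * ((8 * n + 24) * B + 1 / t) := by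
    rw [hM]; field_simp; ring
  rw [h5]
  have h6 : (8 * n + 24) * B + 1 / t ≤ (8 * n + 24) * (B + 1 / t) := by
    have : 0 < 1 / t := by positivity
    nlinarith
  calc 8 / 9 * n * β ^ 2 * ((8 * n + 24) * B + 1 / t)
      ≤ 1 * n * β ^ 2 * ((8 * n + 24) * (B + 1 / t)) := by gcongr; norm_num
    _ = _ := by ring

lemma main_le (hn : 1 ≤ n) {U : (EE n) × ℝ → ℝ} (hU : ContDiff ℝ ∞ U) {T : ℝ}
    (hpos : ∀ x, ∀ t ∈ Icc 0 T, 0 < U (x, t))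
    (heat : ∀ p : (EE n) × ℝ, p.2 ∈ Ioo 0 T → DD (0, 1) U p = ∑ i, DD (ee i) (DD (ee i) U) p)
    {β : ℝ} (hβ : 1 < β) {ρ : ℝ} (hρ : 0 < ρ) (x₀ x : EE n) (hx : ‖x - x₀‖ < ρ / 2)
    {t : ℝ} (ht : t ∈ Ioc 0 T) :
    qq U β (x, t) ≤ n * (8 * n + 24) * β ^ 2 * (β ^ 2 / (ρ ^ 2 * (β - 1)) + 1 / t) := by
  have hxt : (x, t) ∈ {p | 0 < U p} := hpos x t ⟨ht.1.le, ht.2⟩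
  have c0 : ContinuousAt (qq U β) (x, t) :=
    (qq_smooth hU β).continuousOn.continuousAt ((isOpen_pos hU).mem_nhds hxt)
  have c1 : ContinuousAt (fun s => qq U β (x, s)) t :=
    ContinuousAt.comp (f := fun s : ℝ => (x, s)) (g := qq U β) c0 (by fun_prop)
  have ht0 : t ≠ 0 := ht.1.ne'
  have c2 : ContinuousAt (fun s : ℝ =>
      n * (8 * n + 24) * β ^ 2 * (β ^ 2 / (ρ ^ 2 * (β - 1)) + 1 / s)) t := by
    fun_prop (disch := assumption)
  refine le_of_tendsto_of_tendsto (c1.tendsto.mono_left (nhdsWithin_le_nhds (s := Iio t)))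
    (c2.tendsto.mono_left nhdsWithin_le_nhds) ?_
  have : Ioo 0 t ∈ 𝓝[<] t := Ioo_mem_nhdsLT ht.1
  filter_upwards [this] with s hs
  exact main_lt hn hU hpos heat hβ hρ x₀ x hx ⟨hs.1, hs.2.trans_le ht.2⟩

lemma DD_space {U : (EE n) × ℝ → ℝ} (x : EE n) (t : ℝ) (w : EE n)
    (hU : DifferentiableAt ℝ U (x, t)) :
    fderiv ℝ (fun y => U (y, t)) x w = DD ((w, 0) : (EE n) × ℝ) U (x, t) := by
  have h1 : HasFDerivAt (fun y : EE n => (y, t)) (ContinuousLinearMap.inl ℝ (EE n) ℝ) x :=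
    hasFDerivAt_prodMk_left x t
  have := (hU.hasFDerivAt.comp x h1).fderiv
  have e : (fun y => U (y, t)) = U ∘ (fun y : EE n => (y, t)) := rfl
  rw [e, this]; simp [DD]

lemma DD_time {U : (EE n) × ℝ → ℝ} (x : EE n) (t : ℝ)
    (hU : DifferentiableAt ℝ U (x, t)) :
    deriv (fun s => U (x, s)) t = DD ((0, 1) : (EE n) × ℝ) U (x, t) := by
  have h1 : HasDerivAt (fun s : ℝ => (x, s)) ((0, 1) : (EE n) × ℝ) t :=
    (hasDerivAt_const t x).prodMk (hasDerivAt_id t)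
  exact (hU.hasFDerivAt.comp_hasDerivAt t h1).deriv

end Main

theorem local_gradient_estimate_flat (n : ℕ) (hn : 1 ≤ n) :
    ∃ C' : ℝ, 0 < C' ∧
      ∀ T : ℝ, 0 < T →
        ∀ u : EuclideanSpace ℝ (Fin n) → ℝ → ℝ,
          ContDiff ℝ (⊤ : ℕ∞) (fun p : EuclideanSpace ℝ (Fin n) × ℝ => u p.1 p.2) →
          (∀ x, ∀ t ∈ Set.Icc 0 T, 0 < u x t) →
          (∀ x, ∀ t ∈ Set.Icc 0 T,
            deriv (fun s => u x s) t = laplacian (fun y => u y t) x) →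
          ∀ β : ℝ, 1 < β → ∀ ρ : ℝ, 0 < ρ →
            ∀ x₀ x : EuclideanSpace ℝ (Fin n), ‖x - x₀‖ < ρ / 2 →
              ∀ t ∈ Set.Ioc 0 T,
                ‖gradient (fun y => u y t) x‖ ^ 2 / (u x t) ^ 2 -
                    β * deriv (fun s => u x s) t / u x t ≤
                  C' * β ^ 2 * (β ^ 2 / (ρ ^ 2 * (β - 1)) + 1 / t) := by
  have hn0 : (0:ℝ) < n := by exact_mod_cast hn
  refine ⟨n * (8 * n + 24), by positivity, ?_⟩
  intro T hT u hU hpos hheat β hβ ρ hρ x₀ x hx t ht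
  set U : EuclideanSpace ℝ (Fin n) × ℝ → ℝ := fun p => u p.1 p.2 with hUd
  have dU : Differentiable ℝ U := hU.differentiable (by simp)
  have dDU : ∀ v, Differentiable ℝ (DD v U) := fun v p =>
    diffAt_of isOpen_univ (DD_smooth isOpen_univ hU.contDiffOn v) (mem_univ p)
  have heat : ∀ p : EuclideanSpace ℝ (Fin n) × ℝ, p.2 ∈ Ioo 0 T →
      DD (0, 1) U p = ∑ i, DD (ee i) (DD (ee i) U) p := by
    intro p hp
    have h := hheat p.1 p.2 ⟨hp.1.le, hp.2.le⟩
    have h1 := DD_time p.1 p.2 (dU _)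
    rw [show (fun s => U (p.1, s)) = fun s => u p.1 s from rfl, h] at h1
    rw [show p = (p.1, p.2) from rfl, ← h1, laplacian]
    refine Finset.sum_congr rfl fun i _ => ?_
    have h2 : (fun y => fderiv ℝ (fun y => u y p.2) y (EuclideanSpace.single i 1))
        = fun y => DD (ee i) U (y, p.2) := funext fun y => DD_space y p.2 _ (dU _)
    rw [h2]
    exact DD_space p.1 p.2 _ (dDU _ _)
  have hu : 0 < U (x, t) := hpos x t ⟨ht.1.le, ht.2⟩
  have key := main_le hn hU hpos heat hβ hρ x₀ x hx ht
  have hg : ‖gradient (fun y => u y t) x‖ ^ 2 = ∑ i, DD (ee i) U (x, t) ^ 2 := by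
    rw [EuclideanSpace.real_norm_sq_eq]
    refine Finset.sum_congr rfl fun i _ => ?_
    have h1 := inner_gradient_left (𝕜 := ℝ) (f := fun y => u y t) (x := x)
      (y := EuclideanSpace.single i (1:ℝ))
    rw [show fderiv ℝ (fun y => u y t) x (EuclideanSpace.single i 1) = DD (ee i) U (x, t)
      from DD_space x t _ (dU _)] at h1
    rw [← h1, EuclideanSpace.inner_single_right]; simp
  refine le_trans (le_of_eq ?_) key
  rw [hg, show (fun s => u x s) = fun s => U (x, s) from rfl, DD_time x t (dU _),
    show u x t = U (x, t) from rfl, qq]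
  simp only [DD_log _ (dU (x, t)) hu.ne']
  rw [Finset.sum_div, mul_div_assoc]
  congr 1
  exact Finset.sum_congr rfl fun i _ => by rw [div_mul_div_comm, pow_two, pow_two]
end

section
/- Let n ≥ 1. There exists a constant C′ > 0 depending only on n with the following property: for every T > 0, every smooth positive function u : ℝⁿ × [0,T] → (0,∞) satisfying the heat equation ∂u/∂t = Δu, every β > 1, every x ∈ ℝⁿ and every t ∈ (0,T], one has ‖∇u(x,t)‖²/u(x,t)² − β·(∂u/∂t)(x,t)/u(x,t) ≤ C′·β²/t. -/
namespace LY
open scoped ContDiff Topology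
variable {V : Type*} [NormedAddCommGroup V] [NormedSpace ℝ V]

/-- directional derivative -/
noncomputable def D (v : V) (F : V → ℝ) (p : V) : ℝ := fderiv ℝ F p v

def Sm (F : V → ℝ) (p : V) : Prop := ContDiffAt ℝ ∞ F p

lemma Sm.diff {F : V → ℝ} {p : V} (h : Sm F p) : DifferentiableAt ℝ F p :=
  ContDiffAt.differentiableAt h (by simp)

lemma Sm.D {F : V → ℝ} {p : V} (h : Sm F p) (v : V) : Sm (D v F) p := by
  have h1 : ContDiffAt ℝ ∞ (fderiv ℝ F) p := ContDiffAt.fderiv_right (m := ∞) h (by simp)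
  exact h1.clm_apply contDiffAt_const

lemma Sm.mul {F G : V → ℝ} {p : V} (h : Sm F p) (h' : Sm G p) : Sm (fun q => F q * G q) p :=
  ContDiffAt.mul h h'
lemma Sm.sub {F G : V → ℝ} {p : V} (h : Sm F p) (h' : Sm G p) : Sm (fun q => F q - G q) p :=
  ContDiffAt.sub h h'
lemma Sm.add {F G : V → ℝ} {p : V} (h : Sm F p) (h' : Sm G p) : Sm (fun q => F q + G q) p :=
  ContDiffAt.add h h'
lemma Sm.cmul {F : V → ℝ} {p : V} (h : Sm F p) (c : ℝ) : Sm (fun q => c * F q) p :=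
  ContDiffAt.mul contDiffAt_const h
lemma Sm.sum {n : ℕ} {F : Fin n → V → ℝ} {p : V} (h : ∀ i, Sm (F i) p) :
    Sm (fun q => ∑ i, F i q) p :=
  ContDiffAt.sum (fun i _ => h i)

lemma D_mul {F G : V → ℝ} {p : V} (h : Sm F p) (h' : Sm G p) (v : V) :
    D v (fun q => F q * G q) p = D v F p * G p + F p * D v G p := by
  unfold D; rw [fderiv_fun_mul h.diff h'.diff]; simp; ring
lemma D_sub {F G : V → ℝ} {p : V} (h : Sm F p) (h' : Sm G p) (v : V) :
    D v (fun q => F q - G q) p = D v F p - D v G p := by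
  unfold D; rw [fderiv_fun_sub h.diff h'.diff]; simp
lemma D_add {F G : V → ℝ} {p : V} (h : Sm F p) (h' : Sm G p) (v : V) :
    D v (fun q => F q + G q) p = D v F p + D v G p := by
  unfold D; rw [fderiv_fun_add h.diff h'.diff]; simp
lemma D_cmul {F : V → ℝ} {p : V} (h : Sm F p) (c : ℝ) (v : V) :
    D v (fun q => c * F q) p = c * D v F p := by
  unfold D; rw [fderiv_const_mul h.diff]; simp
lemma D_sum {n : ℕ} {F : Fin n → V → ℝ} {p : V} (h : ∀ i, Sm (F i) p) (v : V) :
    D v (fun q => ∑ i, F i q) p = ∑ i, D v (F i) p := by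
  unfold D; rw [fderiv_fun_sum (fun i _ => (h i).diff)]; simp

lemma D_comm {F : V → ℝ} {p : V} (h : Sm F p) (v w : V) :
    D v (D w F) p = D w (D v F) p := by
  have h1 : ContDiffAt ℝ ∞ (fderiv ℝ F) p := ContDiffAt.fderiv_right (m := ∞) h (by simp)
  have h2 : DifferentiableAt ℝ (fderiv ℝ F) p := h1.differentiableAt (by simp)
  have key : ∀ a b : V, D a (D b F) p = fderiv ℝ (fderiv ℝ F) p a b := by
    intro a b
    change fderiv ℝ (fun q => fderiv ℝ F q b) p a = _
    rw [fderiv_clm_apply h2 (differentiableAt_const b)]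
    simp
  rw [key, key]
  have : IsSymmSndFDerivAt ℝ F p := ContDiffAt.isSymmSndFDerivAt h (by
    simp only [minSmoothness_of_isRCLikeNormedField]; exact WithTop.coe_le_coe.2 le_top)
  exact this.eq v w

lemma D_congr {F G : V → ℝ} {s : Set V} (hs : IsOpen s) (h : ∀ q ∈ s, F q = G q) (v : V) :
    ∀ q ∈ s, D v F q = D v G q := by
  intro q hq
  have : F =ᶠ[𝓝 q] G := by filter_upwards [hs.mem_nhds hq] with r hr using h r hr
  unfold D; rw [this.fderiv_eq]

/-- The quantity `|∇f|² - β f_t`. -/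
noncomputable def W {n : ℕ} (e : Fin n → V) (τ : V) (β : ℝ) (f : V → ℝ) (p : V) : ℝ :=
  (∑ i, D (e i) f p * D (e i) f p) - β * D τ f p

lemma Sm.W {n : ℕ} (e : Fin n → V) (τ : V) (β : ℝ) {f : V → ℝ} {p : V} (h : Sm f p) :
    Sm (W e τ β f) p :=
  (Sm.sum fun i => (h.D (e i)).mul (h.D (e i))).sub ((h.D τ).cmul β)

lemma D_W {n : ℕ} (e : Fin n → V) (τ : V) (β : ℝ) {f : V → ℝ} {p : V} (h : Sm f p) (v : V) :
    D v (W e τ β f) p =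
      (∑ i, 2 * (D (e i) f p * D v (D (e i) f) p)) - β * D v (D τ f) p := by
  unfold W
  rw [D_sub (Sm.sum fun i => (h.D (e i)).mul (h.D (e i))) ((h.D τ).cmul β),
    D_sum (fun i => (h.D (e i)).mul (h.D (e i))), D_cmul (h.D τ)]
  congr 1
  refine Finset.sum_congr rfl fun i _ => ?_
  rw [D_mul (h.D _) (h.D _)]; ring

lemma DD_W {n : ℕ} (e : Fin n → V) (τ : V) (β : ℝ) {f : V → ℝ} {s : Set V} (hs : IsOpen s)
    (hf : ∀ q ∈ s, Sm f q) (v : V) {p : V} (hp : p ∈ s) :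
    D v (D v (W e τ β f)) p =
      (∑ i, 2 * (D v (D (e i) f) p * D v (D (e i) f) p + D (e i) f p * D v (D v (D (e i) f)) p))
        - β * D v (D v (D τ f)) p := by
  rw [D_congr hs (fun q hq => D_W e τ β (hf q hq) v) v p hp]
  have h := hf p hp
  rw [D_sub (Sm.sum fun i => ((h.D (e i)).mul ((h.D (e i)).D v)).cmul 2) (((h.D τ).D v).cmul β),
    D_sum (fun i => ((h.D (e i)).mul ((h.D (e i)).D v)).cmul 2), D_cmul ((h.D τ).D v)]
  congr 1
  refine Finset.sum_congr rfl fun i _ => ?_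
  rw [D_cmul ((h.D (e i)).mul ((h.D (e i)).D v)), D_mul (h.D _) ((h.D _).D _)]

lemma bochner {n : ℕ} (e : Fin n → V) (τ : V) (β : ℝ) {f : V → ℝ} {s : Set V} (hs : IsOpen s)
    (hf : ∀ q ∈ s, Sm f q)
    (heq : ∀ q ∈ s, D τ f q = (∑ i, D (e i) (D (e i) f) q) + ∑ i, D (e i) f q * D (e i) f q)
    {p : V} (hp : p ∈ s) :
    D τ (W e τ β f) p - (∑ j, D (e j) (D (e j) (W e τ β f)) p)
      - 2 * (∑ j, D (e j) f p * D (e j) (W e τ β f) p)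
      = - 2 * ∑ j, ∑ i, D (e j) (D (e i) f) p ^ 2 := by
  have h := hf p hp
  -- derivative of the equation
  have hD : ∀ v, D v (D τ f) p = (∑ i, D v (D (e i) (D (e i) f)) p)
      + ∑ i, 2 * (D (e i) f p * D v (D (e i) f) p) := by
    intro v
    rw [D_congr hs heq v p hp, D_add (Sm.sum fun i => (h.D _).D _)
      (Sm.sum fun i => (h.D (e i)).mul (h.D (e i))), D_sum (fun i => (h.D _).D _),
      D_sum (fun i => (h.D (e i)).mul (h.D (e i)))]
    congr 1
    refine Finset.sum_congr rfl fun i _ => ?_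
    rw [D_mul (h.D _) (h.D _)]; ring
  have c2 : ∀ v w z : V, D v (D w (D z f)) p = D v (D z (D w f)) p := fun v w z =>
    D_congr hs (fun q hq => D_comm (hf q hq) w z) v p hp
  have c3 : ∀ v w : V, D v (D v (D w f)) p = D w (D v (D v f)) p := fun v w => by
    rw [c2 v v w, D_comm (h.D v) v w]
  rw [D_W e τ β h τ]
  simp_rw [DD_W e τ β hs hf _ hp, D_W e τ β h]
  simp_rw [c3 _ τ]
  rw [hD τ]
  have e1 : ∀ j, D τ (D (e j) f) p = (∑ i, D (e j) (D (e i) (D (e i) f)) p)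
      + ∑ i, 2 * (D (e i) f p * D (e j) (D (e i) f) p) := fun j => by
    rw [D_comm h, hD]
  have c4 : ∀ i j, D (e j) (D (e j) (D (e i) f)) p = D (e i) (D (e j) (D (e j) f)) p :=
    fun i j => c3 _ _
  have c5 : ∀ j, D (e j) (D τ f) p = D τ (D (e j) f) p := fun j => D_comm h _ _
  simp only [c5]
  simp only [mul_add, mul_sub, Finset.sum_add_distrib, Finset.sum_sub_distrib, ← Finset.mul_sum]
  have c6 : ∑ j, ∑ i, D (e i) f p * D (e j) (D (e j) (D (e i) f)) p =
      ∑ j, ∑ i, D (e i) f p * D (e i) (D (e j) (D (e j) f)) p :=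
    Finset.sum_congr rfl fun j _ => Finset.sum_congr rfl fun i _ => by rw [c4]
  rw [c6]
  have e2 : ∑ j, ∑ i, D (e i) f p * D (e i) (D (e j) (D (e j) f)) p =
    ∑ i, D (e i) f p * ∑ j, D (e i) (D (e j) (D (e j) f)) p := by
    rw [Finset.sum_comm]; simp_rw [Finset.mul_sum]
  have e3 : ∑ i, D (e i) f p * D τ (D (e i) f) p =
      (∑ i, D (e i) f p * ∑ j, D (e i) (D (e j) (D (e j) f)) p)
      + 2 * ∑ j, D (e j) f p * ∑ i, (D (e i) f p * D (e j) (D (e i) f) p) := by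
    simp_rw [e1, mul_add, Finset.sum_add_distrib, ← Finset.mul_sum]
    congr 1
    rw [Finset.mul_sum]
    exact Finset.sum_congr rfl fun i _ => by ring
  rw [e2]
  have e4 : ∑ j, D (e j) f p * (2 * ∑ i, (D (e i) f p * D (e j) (D (e i) f) p)) =
    2 * ∑ j, D (e j) f p * ∑ i, (D (e i) f p * D (e j) (D (e i) f) p) := by
    rw [Finset.mul_sum]
    exact Finset.sum_congr rfl fun i _ => by ring
  have e5 : ∑ j, D (e j) f p * (β * D τ (D (e j) f) p) =
    β * ∑ j, D (e j) f p * D τ (D (e j) f) p := by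
    rw [Finset.mul_sum]
    exact Finset.sum_congr rfl fun i _ => by ring
  rw [e4, e5]
  simp only [← pow_two]
  linear_combination 2 * e3


lemma localMax_D {G : V → ℝ} {p : V} (h : IsLocalMax G p) (v : V) : D v G p = 0 := by
  unfold D; rw [h.fderiv_eq_zero]; simp

lemma D_line {G : V → ℝ} {p v : V} {s : ℝ} (h : Sm G (p + s • v)) :
    HasDerivAt (fun s : ℝ => G (p + s • v)) (D v G (p + s • v)) s := by
  have h1 : HasDerivAt (fun s : ℝ => p + s • v) v s := by
    simpa using ((hasDerivAt_id s).smul_const v).const_add p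
  exact h.diff.hasFDerivAt.comp_hasDerivAt s h1

lemma localMax_DD {G : V → ℝ} {s : Set V} (hs : IsOpen s) (hG : ∀ q ∈ s, Sm G q) {p : V}
    (hp : p ∈ s) (h : IsLocalMax G p) (v : V) : D v (D v G) p ≤ 0 := by
  by_contra! hpos
  set g : ℝ → ℝ := fun r => G (p + r • v) with hg
  have hc : Continuous (fun r : ℝ => p + r • v) := by fun_prop
  have ht : Filter.Tendsto (fun r : ℝ => p + r • v) (𝓝 0) (𝓝 p) := by
    simpa using hc.tendsto 0
  have hd : deriv g =ᶠ[𝓝 0] fun r => D v G (p + r • v) := by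
    filter_upwards [ht.eventually (hs.mem_nhds hp)] with r hr
    exact (D_line (hG _ hr)).deriv
  have hp0 : p + (0:ℝ) • v = p := by simp
  have hdd : deriv (deriv g) 0 = D v (D v G) p := by
    rw [hd.deriv_eq]
    have := (D_line (G := D v G) (p := p) (v := v) (s := 0) (by rw [hp0]; exact (hG p hp).D v)).deriv
    rw [this, hp0]
  have hd0 : deriv g 0 = 0 := by
    rw [hd.self_of_nhds]; simp only [hp0]; exact localMax_D h v
  have hcont : ContinuousAt g 0 := by
    refine (D_line (G := G) (p := p) (v := v) (s := 0) ?_).continuousAt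
    rw [hp0]; exact hG p hp
  have hmin : IsLocalMin g 0 := isLocalMin_of_deriv_deriv_pos (by rw [hdd]; exact hpos) hd0 hcont
  have hmax : IsLocalMax g 0 := by
    have := ht.eventually h
    filter_upwards [this] with r hr
    simpa [hg] using hr
  have heq : g =ᶠ[𝓝 0] fun _ => g 0 := by
    filter_upwards [hmin, hmax] with r h1 h2 using le_antisymm h2 h1
  have : deriv (deriv g) 0 = 0 := by
    rw [heq.deriv.deriv_eq]; simp
  rw [hdd] at this
  linarith

lemma Sm.inv {F : V → ℝ} {p : V} (h : Sm F p) (h0 : F p ≠ 0) : Sm (fun q => (F q)⁻¹) p :=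
  ContDiffAt.inv h h0

lemma D_inv {F : V → ℝ} {p : V} (h : Sm F p) (h0 : F p ≠ 0) (v : V) :
    D v (fun q => (F q)⁻¹) p = - D v F p * ((F p)⁻¹ * (F p)⁻¹) := by
  have h1 := (hasDerivAt_inv h0).comp_hasFDerivAt p h.diff.hasFDerivAt
  have h2 : fderiv ℝ (fun q => (F q)⁻¹) p = _ := h1.fderiv
  unfold D; rw [h2]; simp; field_simp

lemma D_const (c : ℝ) (v : V) (p : V) : D v (fun _ => c) p = 0 := by
  unfold D; simp

abbrev E (n : ℕ) := EuclideanSpace ℝ (Fin n)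
noncomputable def ee {n : ℕ} (i : Fin n) : E n × ℝ := (EuclideanSpace.single i 1, 0)
noncomputable def tau {n : ℕ} : E n × ℝ := (0, 1)

def Y {n : ℕ} (x0 : E n) (j : Fin n) (p : E n × ℝ) : ℝ := p.1 j - x0 j

lemma Sm_Y {n : ℕ} (x0 : E n) (j : Fin n) (p : E n × ℝ) : Sm (Y x0 j) p := by
  unfold Sm Y
  have : ContDiff ℝ ∞ (fun p : E n × ℝ => p.1 j) :=
    (EuclideanSpace.proj (𝕜 := ℝ) j ∘L ContinuousLinearMap.fst ℝ (E n) ℝ).contDiff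
  exact (this.sub contDiff_const).contDiffAt

lemma Sm_snd {n : ℕ} (p : E n × ℝ) : Sm (fun q : E n × ℝ => q.2) p := contDiffAt_snd

lemma D_Y {n : ℕ} (x0 : E n) (j : Fin n) (p v : E n × ℝ) : D v (Y x0 j) p = v.1 j := by
  have : HasFDerivAt (Y x0 j)
    (EuclideanSpace.proj (𝕜 := ℝ) j ∘L ContinuousLinearMap.fst ℝ (E n) ℝ) p :=
    (EuclideanSpace.proj (𝕜 := ℝ) j ∘L ContinuousLinearMap.fst ℝ (E n) ℝ).hasFDerivAt.sub_const _
  unfold D; rw [this.fderiv]; simp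

lemma D_snd {n : ℕ} (p v : E n × ℝ) : D v (fun q : E n × ℝ => q.2) p = v.2 := by
  unfold D; rw [fderiv_snd]; simp

noncomputable def Q {n : ℕ} (x0 : E n) (ρ : ℝ) (p : E n × ℝ) : ℝ :=
  ρ ^ 2 - ∑ j, Y x0 j p * Y x0 j p

lemma Sm_Q {n : ℕ} (x0 : E n) (ρ : ℝ) (p : E n × ℝ) : Sm (Q x0 ρ) p :=
  Sm.sub contDiffAt_const (Sm.sum fun j => (Sm_Y x0 j p).mul (Sm_Y x0 j p))

lemma D_Q {n : ℕ} (x0 : E n) (ρ : ℝ) (p v : E n × ℝ) :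
    D v (Q x0 ρ) p = - 2 * ∑ j, v.1 j * Y x0 j p := by
  unfold Q
  rw [D_sub contDiffAt_const (Sm.sum fun j => (Sm_Y x0 j p).mul (Sm_Y x0 j p)), D_const,
    D_sum (fun j => (Sm_Y x0 j p).mul (Sm_Y x0 j p)), Finset.mul_sum, zero_sub,
    ← Finset.sum_neg_distrib]
  refine Finset.sum_congr rfl fun j _ => ?_
  rw [D_mul (Sm_Y x0 j p) (Sm_Y x0 j p), D_Y]; ring

lemma D_Q_ee {n : ℕ} (x0 : E n) (ρ : ℝ) (p : E n × ℝ) (i : Fin n) :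
    D (ee i) (Q x0 ρ) p = - 2 * Y x0 i p := by
  rw [D_Q]; simp [ee]

lemma D_Q_tau {n : ℕ} (x0 : E n) (ρ : ℝ) (p : E n × ℝ) :
    D tau (Q x0 ρ) p = 0 := by
  rw [D_Q]; simp [tau]

/-- spatial barrier -/
noncomputable def B {n : ℕ} (x0 : E n) (ρ b : ℝ) (p : E n × ℝ) : ℝ :=
  b * ((Q x0 ρ p)⁻¹ * (Q x0 ρ p)⁻¹)
/-- time barrier -/
noncomputable def R {n : ℕ} (A ε T : ℝ) (p : E n × ℝ) : ℝ :=
  A * (p.2)⁻¹ + ε * (T - p.2)⁻¹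

lemma Sm_B {n : ℕ} (x0 : E n) (ρ b : ℝ) (p : E n × ℝ) (h : Q x0 ρ p ≠ 0) :
    Sm (B x0 ρ b) p :=
  Sm.cmul (((Sm_Q x0 ρ p).inv h).mul ((Sm_Q x0 ρ p).inv h)) b

lemma Sm_R {n : ℕ} (A ε T : ℝ) (p : E n × ℝ) (h : p.2 ≠ 0) (h' : T - p.2 ≠ 0) :
    Sm (R A ε T) p :=
  (((Sm_snd p).inv h).cmul A).add
    ((Sm.inv (F := fun q : E n × ℝ => T - q.2) (Sm.sub contDiffAt_const (Sm_snd p)) h').cmul ε)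

lemma D_R {n : ℕ} (A ε T : ℝ) (p v : E n × ℝ) (h : p.2 ≠ 0) (h' : T - p.2 ≠ 0) :
    D v (R A ε T) p = v.2 * (- A / p.2 ^ 2 + ε / (T - p.2) ^ 2) := by
  unfold R
  have s2 : Sm (fun q : E n × ℝ => T - q.2) p := Sm.sub contDiffAt_const (Sm_snd p)
  rw [D_add (((Sm_snd p).inv h).cmul A) ((s2.inv h').cmul ε), D_cmul ((Sm_snd p).inv h),
    D_cmul (s2.inv h'), D_inv (Sm_snd p) h, D_inv s2 h', D_sub contDiffAt_const (Sm_snd p),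
    D_snd, D_const]
  field_simp
  ring

lemma D_B {n : ℕ} (x0 : E n) (ρ b : ℝ) (p v : E n × ℝ) (h : Q x0 ρ p ≠ 0) :
    D v (B x0 ρ b) p =
      (-2 * b) * (D v (Q x0 ρ) p * ((Q x0 ρ p)⁻¹ * ((Q x0 ρ p)⁻¹ * (Q x0 ρ p)⁻¹))) := by
  have s := (Sm_Q x0 ρ p).inv h
  unfold B
  rw [D_cmul (s.mul s), D_mul s s, D_inv (Sm_Q x0 ρ p) h]
  ring

lemma Q_open {n : ℕ} (x0 : E n) (ρ : ℝ) : Continuous (Q x0 ρ) :=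
  continuous_iff_continuousAt.2 fun p => (Sm_Q x0 ρ p).diff.continuousAt

lemma DD_B {n : ℕ} (x0 : E n) (ρ b : ℝ) (p : E n × ℝ) (i : Fin n) (h : Q x0 ρ p ≠ 0) :
    D (ee i) (D (ee i) (B x0 ρ b)) p =
      4 * b / (Q x0 ρ p) ^ 3 + 24 * b * Y x0 i p ^ 2 / (Q x0 ρ p) ^ 4 := by
  have ho : IsOpen {p | Q x0 ρ p ≠ 0} := isOpen_ne_fun (Q_open x0 ρ) continuous_const
  rw [D_congr (G := fun p => (4 * b) * (Y x0 i p *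
    ((Q x0 ρ p)⁻¹ * ((Q x0 ρ p)⁻¹ * (Q x0 ρ p)⁻¹)))) ho ?_ _ p h]
  · have s := (Sm_Q x0 ρ p).inv h
    rw [D_cmul ((Sm_Y x0 i p).mul (s.mul (s.mul s))), D_mul (Sm_Y x0 i p) (s.mul (s.mul s)),
      D_mul s (s.mul s), D_mul s s, D_inv (Sm_Q x0 ρ p) h, D_Q_ee, D_Y]
    have h1 : (ee i : E n × ℝ).1 i = 1 := by simp [ee]
    rw [h1]
    field_simp
    ring
  · intro q hq
    rw [D_B x0 ρ b q _ hq, D_Q_ee]; ring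

lemma pointwise {n A c k m β w g2 lap H2 fy r2 q ρ t s ε b : ℝ} (hn : 0 < n) (hβ : 1 < β)
    (hc : c = 2 / (n * β ^ 2)) (hA : c * A = 1) (hk : k = β - 1) (hm : m = k * c) (hρ : 0 < ρ)
    (hb : b = ρ ^ 2 * (4 * n + 24 + 8 / m) / c)
    (ht : 0 < t) (hs : 0 < s) (hε : 0 < ε) (hq : 0 < q) (hqr : q = ρ ^ 2 - r2) (hr : 0 ≤ r2)
    (hg : 0 ≤ g2)
    (h1 : - A / t ^ 2 + ε / s ^ 2 - (4 * b * n / q ^ 3 + 24 * b * r2 / q ^ 4)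
      - 2 * (4 * b * fy / q ^ 3) ≤ - 2 * H2)
    (h2 : lap ^ 2 ≤ n * H2) (h3 : β * lap = - (w + k * g2))
    (h4 : A / t + ε / s + b / q ^ 2 < w) (h5 : fy ^ 2 ≤ g2 * r2) : False := by
  have hc0 : 0 < c := by rw [hc]; positivity
  have hA0 : 0 < A := by by_contra! h; nlinarith
  have hk0 : 0 < k := by linarith
  have hm0 : 0 < m := by rw [hm]; positivity
  have hb0 : 0 < b := by rw [hb]; positivity
  have hcb : c * b = ρ ^ 2 * (4 * n + 24 + 8 / m) := by rw [hb]; field_simp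
  have hs1 : 0 < ε / s := by positivity
  have hs2 : 0 < ε / s ^ 2 := by positivity
  obtain ⟨X, hX⟩ : ∃ X, X = 1 / t := ⟨_, rfl⟩
  obtain ⟨P, hP⟩ : ∃ P, P = 1 / q := ⟨_, rfl⟩
  have hX0 : 0 < X := by rw [hX]; positivity
  have hP0 : 0 < P := by rw [hP]; positivity
  have hqP : q * P = 1 := by rw [hP]; field_simp
  have a1 : - A / t ^ 2 = - A * X ^ 2 := by rw [hX]; field_simp
  have a2 : A / t = A * X := by rw [hX]; field_simp
  have a3 : b / q ^ 2 = b * P ^ 2 := by rw [hP]; field_simp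
  have a4 : 4 * b * n / q ^ 3 = 4 * b * n * P ^ 3 := by rw [hP]; field_simp
  have a5 : 24 * b * r2 / q ^ 4 = 24 * b * r2 * P ^ 4 := by rw [hP]; field_simp
  have a6 : 4 * b * fy / q ^ 3 = 4 * b * fy * P ^ 3 := by rw [hP]; field_simp
  rw [a1, a4, a5, a6] at h1
  rw [a2, a3] at h4
  have hw0 : 0 < w := lt_of_le_of_lt (by positivity) h4
  have w1 : A * X + b * P ^ 2 < w := by linarith
  have w2 : A ^ 2 * X ^ 2 + b ^ 2 * P ^ 4 < w ^ 2 := by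
    have h0 : 0 < A * X * (b * P ^ 2) := by positivity
    have : (A * X + b * P ^ 2) ^ 2 < w ^ 2 := pow_lt_pow_left₀ w1 (by positivity) (by norm_num)
    have e : (A * X + b * P ^ 2) ^ 2 = A ^ 2 * X ^ 2 + b ^ 2 * P ^ 4 + 2 * (A * X * (b * P ^ 2)) := by
      ring
    linarith
  have w3 : b * P ^ 2 * g2 ≤ w * g2 := by
    have : 0 < A * X := by positivity
    exact mul_le_mul_of_nonneg_right (by linarith) hg
  have w4 : c * (w ^ 2 + 2 * k * (w * g2)) ≤ 2 * H2 := by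
    have e1 : (w + k * g2) ^ 2 ≤ β ^ 2 * (n * H2) := by
      have : (w + k * g2) ^ 2 = β ^ 2 * lap ^ 2 := by rw [← mul_pow, h3]; ring
      rw [this]; exact mul_le_mul_of_nonneg_left h2 (by positivity)
    have e2 : w ^ 2 + 2 * k * (w * g2) ≤ β ^ 2 * (n * H2) := by
      have e : (w + k * g2) ^ 2 = w ^ 2 + 2 * k * (w * g2) + (k * g2) ^ 2 := by ring
      linarith [sq_nonneg (k * g2)]
    have e3 : c * (β ^ 2 * (n * H2)) = 2 * H2 := by rw [hc]; field_simp
    rw [← e3]; exact mul_le_mul_of_nonneg_left e2 hc0.le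
  have hP3 : P ^ 3 ≤ ρ ^ 2 * P ^ 4 := by
    have : P ^ 3 = q * P ^ 4 := by linear_combination (-P ^ 3) * hqP
    rw [this]; exact mul_le_mul_of_nonneg_right (by linarith) (by positivity)
  have hr4 : r2 * P ^ 4 ≤ ρ ^ 2 * P ^ 4 := mul_le_mul_of_nonneg_right (by linarith) (by positivity)
  have hfy : 8 * fy * P ≤ 2 * m * g2 + 8 / m * (ρ ^ 2 * P ^ 2) := by
    refine le_of_abs_le (abs_le_of_sq_le_sq ?_ (by positivity))
    have e1 : (2 * m * g2 + 8 / m * (ρ ^ 2 * P ^ 2)) ^ 2 =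
        (2 * m * g2 - 8 / m * (ρ ^ 2 * P ^ 2)) ^ 2 + 64 * (g2 * ρ ^ 2) * P ^ 2 := by
      field_simp; ring
    have e2 : fy ^ 2 ≤ g2 * ρ ^ 2 := h5.trans (mul_le_mul_of_nonneg_left (by linarith) hg)
    have e3 : fy ^ 2 * P ^ 2 ≤ g2 * ρ ^ 2 * P ^ 2 := mul_le_mul_of_nonneg_right e2 (sq_nonneg P)
    rw [e1]
    linarith [sq_nonneg (2 * m * g2 - 8 / m * (ρ ^ 2 * P ^ 2))]
  have hfy3 : 8 * fy * P ^ 3 ≤ 2 * m * (g2 * P ^ 2) + 8 / m * (ρ ^ 2 * P ^ 4) := by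
    have := mul_le_mul_of_nonneg_right hfy (sq_nonneg P)
    linarith
  have f1 : b * (8 * fy * P ^ 3) ≤ b * (2 * m * (g2 * P ^ 2) + 8 / m * (ρ ^ 2 * P ^ 4)) :=
    mul_le_mul_of_nonneg_left hfy3 hb0.le
  have f2 : b * n * P ^ 3 ≤ b * n * (ρ ^ 2 * P ^ 4) :=
    mul_le_mul_of_nonneg_left hP3 (by positivity)
  have f3 : b * (r2 * P ^ 4) ≤ b * (ρ ^ 2 * P ^ 4) := mul_le_mul_of_nonneg_left hr4 hb0.le
  have f4 : c * (A ^ 2 * X ^ 2 + b ^ 2 * P ^ 4) < c * w ^ 2 := mul_lt_mul_of_pos_left w2 hc0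
  have f5 : 2 * m * (b * P ^ 2 * g2) ≤ 2 * m * (w * g2) :=
    mul_le_mul_of_nonneg_left w3 (by positivity)
  have f6 : c * (A ^ 2 * X ^ 2 + b ^ 2 * P ^ 4) = A * X ^ 2
      + b * (ρ ^ 2 * (4 * n + 24 + 8 / m)) * P ^ 4 := by
    rw [← hcb]; linear_combination (A * X ^ 2) * hA
  rw [f6] at f4
  have f7 : c * (w ^ 2 + 2 * k * (w * g2)) = c * w ^ 2 + 2 * m * (w * g2) := by rw [hm]; ring
  rw [f7] at w4
  linarith

/-- barrier comparison -/
lemma core {n : ℕ} (hn : 1 ≤ n) {T : ℝ} {f : E n × ℝ → ℝ}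
    (hf : ∀ p : E n × ℝ, p.2 ∈ Set.Icc 0 T → Sm f p)
    (heq : ∀ q : E n × ℝ, q.2 ∈ Set.Ioo 0 T →
      D tau f q = (∑ i, D (ee i) (D (ee i) f) q) + ∑ i, D (ee i) f q * D (ee i) f q)
    {A c k m β b ρ ε : ℝ} (hβ : 1 < β)
    (hc : c = 2 / (n * β ^ 2)) (hA : c * A = 1) (hk : k = β - 1) (hm : m = k * c) (hρ : 0 < ρ)
    (hb : b = ρ ^ 2 * (4 * n + 24 + 8 / m) / c) (hε : 0 < ε) (x0 : E n) {t : ℝ}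
    (ht : t ∈ Set.Ioo 0 T) :
    W ee tau β f (x0, t) ≤ R A ε T (x0, t) + B x0 ρ b (x0, t) := by
  by_contra! hcon
  have hn0 : (0:ℝ) < n := by exact_mod_cast hn
  have hc0 : 0 < c := by rw [hc]; positivity
  have hA0 : 0 < A := by by_contra! h; nlinarith
  have hk0 : 0 < k := by linarith
  have hm0 : 0 < m := by rw [hm]; positivity
  have hb0 : 0 < b := by rw [hb]; positivity
  have hQ0 : Q x0 ρ (x0, t) = ρ ^ 2 := by simp [Q, Y]
  -- compact cylinder
  set C : Set (E n × ℝ) := Metric.closedBall x0 ρ ×ˢ Set.Icc 0 T with hC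
  have hCc : IsCompact C := (isCompact_closedBall x0 ρ).prod isCompact_Icc
  have hWc : ContinuousOn (W ee tau β f) C := fun p hp =>
    (Sm.W ee tau β (hf p hp.2)).diff.continuousAt.continuousWithinAt
  obtain ⟨M, hM⟩ := (hCc.image_of_continuousOn hWc).bddAbove
  have hM' : ∀ p ∈ C, W ee tau β f p ≤ M := fun p hp => hM ⟨p, hp, rfl⟩
  have hQC : ∀ p : E n × ℝ, 0 ≤ Q x0 ρ p → p.1 ∈ Metric.closedBall x0 ρ := by
    intro p hp
    rw [Metric.mem_closedBall, EuclideanSpace.dist_eq]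
    apply Real.sqrt_le_iff.2 ⟨hρ.le, ?_⟩
    simp only [Q, Y] at hp
    have : ∑ i, dist (p.1 i) (x0 i) ^ 2 = ∑ j, (p.1 j - x0 j) * (p.1 j - x0 j) :=
      Finset.sum_congr rfl fun i _ => by rw [Real.dist_eq, sq_abs, pow_two]
    linarith
  set S : Set (E n × ℝ) := {p : E n × ℝ | 0 < p.2 ∧ 0 < T - p.2 ∧ 0 < Q x0 ρ p} with hS
  have hSo : IsOpen S := by
    have := Q_open x0 ρ
    have o1 : IsOpen {p : E n × ℝ | 0 < p.2} := isOpen_lt continuous_const continuous_snd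
    have o2 : IsOpen {p : E n × ℝ | 0 < T - p.2} := isOpen_lt continuous_const (by fun_prop)
    exact o1.inter (o2.inter (isOpen_lt continuous_const this))
  have hSC : S ⊆ C := fun p hp => ⟨hQC p hp.2.2.le, hp.1.le, by linarith [hp.2.1]⟩
  set G : E n × ℝ → ℝ := fun p => W ee tau β f p - (R A ε T p + B x0 ρ b p) with hG
  have hGs : ∀ p ∈ S, Sm G p := fun p hp =>
    (Sm.W ee tau β (hf p (hSC hp).2)).sub
      ((Sm_R A ε T p hp.1.ne' hp.2.1.ne').add (Sm_B x0 ρ b p hp.2.2.ne'))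
  -- points with positive G
  have hpos : ∀ p ∈ S, 0 < G p → A < M * p.2 ∧ ε < M * (T - p.2) ∧ b < M * Q x0 ρ p ^ 2 := by
    intro p hp hGp
    have h1 : R A ε T p + B x0 ρ b p < M := by
      have := hM' p (hSC hp); simp only [hG] at hGp; linarith
    obtain ⟨p1, p2, p3⟩ := hp
    have a1 : 0 < A * (p.2)⁻¹ := by positivity
    have a2 : 0 < ε * (T - p.2)⁻¹ := by positivity
    have a3 : 0 < b * ((Q x0 ρ p)⁻¹ * (Q x0 ρ p)⁻¹) := by positivity
    simp only [R, B] at h1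
    refine ⟨?_, ?_, ?_⟩
    · have : A * (p.2)⁻¹ < M := by linarith
      rwa [← div_eq_mul_inv, div_lt_iff₀ p1] at this
    · have : ε * (T - p.2)⁻¹ < M := by linarith
      rwa [← div_eq_mul_inv, div_lt_iff₀ p2] at this
    · have : b * ((Q x0 ρ p)⁻¹ * (Q x0 ρ p)⁻¹) < M := by linarith
      rw [← mul_inv, ← pow_two, ← div_eq_mul_inv, div_lt_iff₀ (by positivity)] at this
      exact this
  have hp1S : ((x0, t) : E n × ℝ) ∈ S :=
    ⟨ht.1, by simpa using ht.2, by rw [hQ0]; positivity⟩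
  have hp1G : 0 < G (x0, t) := by simp only [hG]; linarith
  have hM0 : 0 < M := by
    have := (hpos _ hp1S hp1G).1
    by_contra! h
    have := mul_nonpos_of_nonpos_of_nonneg h ht.1.le
    simp only at *
    linarith
  set K : Set (E n × ℝ) :=
    {p | A ≤ M * p.2 ∧ ε ≤ M * (T - p.2) ∧ b ≤ M * Q x0 ρ p ^ 2 ∧ 0 ≤ Q x0 ρ p} with hK
  have hKcl : IsClosed K := by
    have := Q_open x0 ρ
    have o1 : IsClosed {p : E n × ℝ | A ≤ M * p.2} := isClosed_le continuous_const (by fun_prop)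
    have o2 : IsClosed {p : E n × ℝ | ε ≤ M * (T - p.2)} :=
      isClosed_le continuous_const (by fun_prop)
    have o3 : IsClosed {p : E n × ℝ | b ≤ M * Q x0 ρ p ^ 2} :=
      isClosed_le continuous_const (by fun_prop)
    exact o1.inter (o2.inter (o3.inter (isClosed_le continuous_const this)))
  have hKS : K ⊆ S := by
    rintro p ⟨h1, h2, h3, h4⟩
    refine ⟨pos_of_mul_pos_right (lt_of_lt_of_le hA0 h1) hM0.le,
      pos_of_mul_pos_right (lt_of_lt_of_le hε h2) hM0.le, lt_of_le_of_ne h4 fun h => ?_⟩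
    rw [← h] at h3; simp at h3; linarith
  have hKc : IsCompact K := hCc.of_isClosed_subset hKcl (hKS.trans hSC)
  have hSK : ∀ p ∈ S, 0 < G p → p ∈ K := fun p hp hg => by
    obtain ⟨h1, h2, h3⟩ := hpos p hp hg
    exact ⟨h1.le, h2.le, h3.le, hp.2.2.le⟩
  obtain ⟨p, hpK, hpmax⟩ := hKc.exists_isMaxOn ⟨_, hSK _ hp1S hp1G⟩
    (fun q hq => (hGs q (hKS hq)).diff.continuousAt.continuousWithinAt : ContinuousOn G K)
  have hpS := hKS hpK
  have hpG : 0 < G p := lt_of_lt_of_le hp1G (hpmax (hSK _ hp1S hp1G))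
  have hloc : IsLocalMax G p := by
    filter_upwards [hSo.mem_nhds hpS] with q hq
    by_cases h : 0 < G q
    · exact hpmax (hSK q hq h)
    · linarith
  -- derivatives at p
  have hSm := hf p (hSC hpS).2
  obtain ⟨p1, p2, p3⟩ := id hpS
  have hI : IsOpen {q : E n × ℝ | q.2 ∈ Set.Ioo 0 T} := isOpen_Ioo.preimage continuous_snd
  have hboch := bochner ee tau β (f := f) hI (fun q hq => hf q ⟨hq.1.le, hq.2.le⟩) heq
    (p := p) ⟨p1, by linarith⟩
  have hDG : ∀ q ∈ S, ∀ v, D v G q =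
      D v (W ee tau β f) q - (D v (R A ε T) q + D v (B x0 ρ b) q) := by
    intro q hq v
    have s1 := Sm_R A ε T q hq.1.ne' hq.2.1.ne'
    have s2 := Sm_B x0 ρ b q hq.2.2.ne'
    rw [hG, D_sub (Sm.W ee tau β (hf q (hSC hq).2)) (s1.add s2), D_add s1 s2]
  have hDR : ∀ i : Fin n, ∀ q ∈ S, D (ee i) (R A ε T) q = 0 := by
    intro i q hq
    rw [D_R A ε T q _ hq.1.ne' hq.2.1.ne']; simp [ee]
  have hDDG : ∀ i : Fin n, D (ee i) (D (ee i) (W ee tau β f)) p ≤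
      4 * b / (Q x0 ρ p) ^ 3 + 24 * b * Y x0 i p ^ 2 / (Q x0 ρ p) ^ 4 := by
    intro i
    have h0 := localMax_DD hSo hGs hpS hloc (ee i)
    rw [D_congr (G := fun q => D (ee i) (W ee tau β f) q - D (ee i) (B x0 ρ b) q) hSo
      (fun q hq => by rw [hDG q hq, hDR i q hq, zero_add]) _ p hpS,
      D_sub ((Sm.W ee tau β hSm).D _) ((Sm_B x0 ρ b p p3.ne').D _), DD_B x0 ρ b p i p3.ne'] at h0
    linarith
  have hDj : ∀ i : Fin n, D (ee i) (W ee tau β f) p = 4 * b * Y x0 i p / Q x0 ρ p ^ 3 := by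
    intro i
    have h0 := localMax_D hloc (ee i)
    rw [hDG p hpS, hDR i p hpS, D_B x0 ρ b p _ p3.ne', D_Q_ee] at h0
    have : 4 * b * Y x0 i p / Q x0 ρ p ^ 3 = -2 * b * (-2 * Y x0 i p *
      ((Q x0 ρ p)⁻¹ * ((Q x0 ρ p)⁻¹ * (Q x0 ρ p)⁻¹))) := by field_simp; ring
    rw [this]; linarith
  have hDt : D tau (W ee tau β f) p = - A / p.2 ^ 2 + ε / (T - p.2) ^ 2 := by
    have h0 := localMax_D hloc tau
    rw [hDG p hpS, D_R A ε T p _ p1.ne' p2.ne', D_B x0 ρ b p _ p3.ne', D_Q_tau] at h0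
    simp only [tau] at h0 ⊢
    linarith
  have hpe := heq p ⟨p1, by linarith⟩
  refine pointwise (n := n) (g2 := ∑ i, D (ee i) f p * D (ee i) f p)
    (lap := ∑ i, D (ee i) (D (ee i) f) p) (w := W ee tau β f p)
    (H2 := ∑ j, ∑ i, D (ee j) (D (ee i) f) p ^ 2) (fy := ∑ i, D (ee i) f p * Y x0 i p)
    (r2 := ∑ j, Y x0 j p * Y x0 j p) (q := Q x0 ρ p)
    hn0 hβ hc hA hk hm hρ hb p1 p2 hε p3 rfl
    (Finset.sum_nonneg fun i _ => mul_self_nonneg _)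
    (Finset.sum_nonneg fun i _ => mul_self_nonneg _) ?_ ?_ ?_ ?_ ?_
  · rw [← hboch, hDt]
    have h1 : ∑ j, D (ee j) (D (ee j) (W ee tau β f)) p ≤
      4 * b * n / Q x0 ρ p ^ 3 + 24 * b * (∑ j, Y x0 j p * Y x0 j p) / Q x0 ρ p ^ 4 := by
      refine (Finset.sum_le_sum fun i _ => hDDG i).trans (le_of_eq ?_)
      rw [Finset.sum_add_distrib, Finset.sum_const, Finset.mul_sum, Finset.sum_div]
      simp only [Finset.card_univ, Fintype.card_fin, nsmul_eq_mul, pow_two]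
      ring
    have h2 : ∑ j, D (ee j) f p * D (ee j) (W ee tau β f) p =
        4 * b * (∑ i, D (ee i) f p * Y x0 i p) / Q x0 ρ p ^ 3 := by
      rw [Finset.mul_sum, Finset.sum_div]
      exact Finset.sum_congr rfl fun i _ => by rw [hDj]; ring
    rw [h2]; linarith
  · have h1 := sq_sum_le_card_mul_sum_sq (s := Finset.univ) (f := fun i : Fin n => D (ee i) (D (ee i) f) p)
    simp only [Finset.card_univ, Fintype.card_fin] at h1
    refine h1.trans (mul_le_mul_of_nonneg_left ?_ hn0.le)
    refine Finset.sum_le_sum fun i _ => ?_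
    exact Finset.single_le_sum (f := fun j => D (ee i) (D (ee j) f) p ^ 2)
      (fun j _ => sq_nonneg _) (Finset.mem_univ i)
  · unfold W; rw [hpe, hk]; ring
  · simp only [hG, R, B] at hpG
    have : b / Q x0 ρ p ^ 2 = b * ((Q x0 ρ p)⁻¹ * (Q x0 ρ p)⁻¹) := by field_simp
    rw [this, div_eq_mul_inv, div_eq_mul_inv]; linarith
  · have := Finset.sum_mul_sq_le_sq_mul_sq Finset.univ (fun i => D (ee i) f p) (fun i => Y x0 i p)
    simpa only [pow_two] using this

lemma interior_bound {n : ℕ} (hn : 1 ≤ n) {T : ℝ} {f : E n × ℝ → ℝ}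
    (hf : ∀ p : E n × ℝ, p.2 ∈ Set.Icc 0 T → Sm f p)
    (heq : ∀ q : E n × ℝ, q.2 ∈ Set.Ioo 0 T →
      D tau f q = (∑ i, D (ee i) (D (ee i) f) q) + ∑ i, D (ee i) f q * D (ee i) f q)
    {β : ℝ} (hβ : 1 < β) (x0 : E n) {t : ℝ} (ht : t ∈ Set.Ioo 0 T) :
    W ee tau β f (x0, t) ≤ n / 2 * β ^ 2 / t := by
  have hn0 : (0:ℝ) < n := by exact_mod_cast hn
  refine le_of_forall_pos_le_add fun δ hδ => ?_
  obtain ⟨c, hc⟩ : ∃ c : ℝ, c = 2 / (n * β ^ 2) := ⟨_, rfl⟩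
  obtain ⟨m, hm⟩ : ∃ m : ℝ, m = (β - 1) * c := ⟨_, rfl⟩
  have hc0 : 0 < c := by rw [hc]; positivity
  have hm0 : 0 < m := by rw [hm]; exact mul_pos (by linarith) hc0
  obtain ⟨k, hk⟩ : ∃ k : ℝ, k = (4 * n + 24 + 8 / m) / c := ⟨_, rfl⟩
  have hk0 : 0 < k := by rw [hk]; positivity
  have hT : 0 < T - t := by linarith [ht.2]
  have hρ : 0 < Real.sqrt (2 * k / δ) := Real.sqrt_pos.2 (by positivity)
  have hρ2 : Real.sqrt (2 * k / δ) ^ 2 = 2 * k / δ := Real.sq_sqrt (by positivity)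
  set ρ := Real.sqrt (2 * k / δ)
  have h := core hn hf heq (A := n / 2 * β ^ 2) hβ hc (by rw [hc]; field_simp) rfl hm hρ
    (b := ρ ^ 2 * (4 * n + 24 + 8 / m) / c) rfl (ε := δ / 2 * (T - t)) (by positivity) x0 ht
  have hQ0 : Q x0 ρ (x0, t) = ρ ^ 2 := by simp [Q, Y]
  have e1 : B x0 ρ (ρ ^ 2 * (4 * n + 24 + 8 / m) / c) (x0, t) = δ / 2 := by
    have : ρ ^ 2 * (4 * n + 24 + 8 / m) / c = ρ ^ 2 * k := by rw [hk]; ring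
    rw [this, B, hQ0, hρ2]; field_simp
  have e2 : R (n / 2 * β ^ 2) (δ / 2 * (T - t)) T (x0, t) = n / 2 * β ^ 2 / t + δ / 2 := by
    simp only [R]; field_simp
  rw [e1, e2] at h
  linarith

lemma final_bound {n : ℕ} (hn : 1 ≤ n) {T : ℝ} (hT : 0 < T) {f : E n × ℝ → ℝ}
    (hf : ∀ p : E n × ℝ, p.2 ∈ Set.Icc 0 T → Sm f p)
    (heq : ∀ q : E n × ℝ, q.2 ∈ Set.Ioo 0 T →
      D tau f q = (∑ i, D (ee i) (D (ee i) f) q) + ∑ i, D (ee i) f q * D (ee i) f q)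
    {β : ℝ} (hβ : 1 < β) (x0 : E n) {t : ℝ} (ht : t ∈ Set.Ioc 0 T) :
    W ee tau β f (x0, t) ≤ n / 2 * β ^ 2 / t := by
  rcases lt_or_eq_of_le ht.2 with h | h
  · exact interior_bound hn hf heq hβ x0 ⟨ht.1, h⟩
  · subst h
    have h1 : ContinuousAt (fun s : ℝ => W ee tau β f (x0, s)) t :=
      ContinuousAt.comp (f := fun s : ℝ => (x0, s)) (g := W ee tau β f)
        (Sm.W ee tau β (hf (x0, t) ⟨ht.1.le, le_rfl⟩)).diff.continuousAt (by fun_prop)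
    have h2 : ContinuousAt (fun s : ℝ => n / 2 * β ^ 2 / s) t :=
      continuousAt_const.div continuousAt_id hT.ne'
    refine le_of_tendsto_of_tendsto (b := 𝓝[<] t) (h1.tendsto.mono_left nhdsWithin_le_nhds)
      (h2.tendsto.mono_left nhdsWithin_le_nhds) ?_
    filter_upwards [Ioo_mem_nhdsLT hT] with s hs
    exact interior_bound hn hf heq hβ x0 hs

lemma D_ee_eq {n : ℕ} {F : E n × ℝ → ℝ} {x : E n} {t : ℝ} (h : Sm F (x, t)) (i : Fin n) :
    D (ee i) F (x, t) = fderiv ℝ (fun y => F (y, t)) x (EuclideanSpace.single i 1) := by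
  have h1 : HasFDerivAt (fun y : E n => (y, t)) (ContinuousLinearMap.inl ℝ (E n) ℝ) x :=
    hasFDerivAt_prodMk_left x t
  have := (h.diff.hasFDerivAt.comp x h1).fderiv
  have h3 : fderiv ℝ (fun y => F (y, t)) x = _ := this
  rw [h3]; simp [D, ee]

lemma D_tau_eq {n : ℕ} {F : E n × ℝ → ℝ} {x : E n} {t : ℝ} (h : Sm F (x, t)) :
    D tau F (x, t) = deriv (fun s => F (x, s)) t := by
  have h1 : HasDerivAt (fun s : ℝ => (x, s)) ((0 : E n), (1:ℝ)) t :=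
    (hasDerivAt_const t x).prodMk (hasDerivAt_id t)
  exact (h.diff.hasFDerivAt.comp_hasDerivAt t h1).deriv.symm

lemma norm_gradient_sq {n : ℕ} (g : E n → ℝ) (x : E n) :
    ‖gradient g x‖ ^ 2 = ∑ i, fderiv ℝ g x (EuclideanSpace.single i 1) ^ 2 := by
  rw [EuclideanSpace.real_norm_sq_eq]
  refine Finset.sum_congr rfl fun i _ => ?_
  congr 1
  have h : inner ℝ (gradient g x) (EuclideanSpace.single i (1:ℝ)) =
      fderiv ℝ g x (EuclideanSpace.single i 1) := by
    simp [gradient]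
  rw [← h, EuclideanSpace.inner_single_right]; simp

lemma Sm.log {F : V → ℝ} {p : V} (h : Sm F p) (h0 : F p ≠ 0) : Sm (fun q => Real.log (F q)) p :=
  ContDiffAt.log h h0

lemma D_log {F : V → ℝ} {p : V} (h : Sm F p) (h0 : F p ≠ 0) (v : V) :
    D v (fun q => Real.log (F q)) p = D v F p * (F p)⁻¹ := by
  unfold D; rw [fderiv.log h.diff h0]; simp [mul_comm]

lemma DD_log {F : V → ℝ} (hF : ∀ p, Sm F p) {p : V} (h0 : 0 < F p) (v : V) :
    D v (D v (fun q => Real.log (F q))) p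
      = D v (D v F) p * (F p)⁻¹ - (D v F p * (F p)⁻¹) * (D v F p * (F p)⁻¹) := by
  have hc : Continuous F := continuous_iff_continuousAt.2 fun p => (hF p).diff.continuousAt
  have ho : IsOpen {p | 0 < F p} := isOpen_lt continuous_const hc
  rw [D_congr ho (fun q hq => D_log (hF q) (ne_of_gt hq) v) v p h0,
    D_mul ((hF p).D v) ((hF p).inv h0.ne'), D_inv (hF p) h0.ne']
  ring

end LY

/-- The global gradient estimate obtained from Theorem 1.2 by letting `ρ → ∞`, in
the static Euclidean case: there is `C′ = C′(n) > 0` such that every positive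
solution of the heat equation satisfies `‖∇u‖²/u² − β uₜ/u ≤ C′β²/t` for `β > 1`. -/
theorem global_gradient_estimate_flat (n : ℕ) (hn : 1 ≤ n) :
    ∃ C' : ℝ, 0 < C' ∧
      ∀ T : ℝ, 0 < T →
        ∀ u : EuclideanSpace ℝ (Fin n) → ℝ → ℝ,
          ContDiff ℝ (⊤ : ℕ∞) (fun p : EuclideanSpace ℝ (Fin n) × ℝ => u p.1 p.2) →
          (∀ x, ∀ t ∈ Set.Icc 0 T, 0 < u x t) →
          (∀ x, ∀ t ∈ Set.Icc 0 T,
            deriv (fun s => u x s) t = laplacian (fun y => u y t) x) →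
          ∀ β : ℝ, 1 < β →
            ∀ x : EuclideanSpace ℝ (Fin n), ∀ t ∈ Set.Ioc 0 T,
              ‖gradient (fun y => u y t) x‖ ^ 2 / (u x t) ^ 2 -
                  β * deriv (fun s => u x s) t / u x t ≤
                C' * β ^ 2 / t := by
  have hn0 : (0:ℝ) < n := by exact_mod_cast hn
  refine ⟨n / 2, by positivity, ?_⟩
  intro T hT u hu hpos hheat β hβ x t ht
  set U : LY.E n × ℝ → ℝ := fun p => u p.1 p.2 with hU
  have hS : ∀ p, LY.Sm U p := fun p => hu.contDiffAt
  have hP : ∀ p : LY.E n × ℝ, p.2 ∈ Set.Icc 0 T → 0 < U p := fun p hp => hpos p.1 p.2 hp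
  have ht' : t ∈ Set.Icc 0 T := ⟨ht.1.le, ht.2⟩
  have hD : ∀ (i : Fin n) (y : LY.E n) (s : ℝ), LY.D (LY.ee i) U (y, s) =
      fderiv ℝ (fun y => u y s) y (EuclideanSpace.single i 1) := fun i y s => LY.D_ee_eq (hS _) i
  have hDt : ∀ (y : LY.E n) (s : ℝ), LY.D LY.tau U (y, s) = deriv (fun s => u y s) s :=
    fun y s => LY.D_tau_eq (hS _)
  have key := LY.final_bound hn hT (f := fun q => Real.log (U q))
    (fun p hp => (hS p).log (hP p hp).ne') ?_ hβ x ht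
  · have h0 := hP (x, t) ht'
    unfold LY.W at key
    simp only [LY.D_log (hS (x, t)) h0.ne', hD, hDt] at key
    refine le_trans (le_of_eq ?_) key
    rw [LY.norm_gradient_sq, Finset.sum_div]
    congr 1
    · refine Finset.sum_congr rfl fun i _ => ?_
      simp only [hU]
      ring
    · simp only [hU]; ring
  · rintro ⟨y, s⟩ hs
    have hs' : s ∈ Set.Icc 0 T := ⟨hs.1.le, hs.2.le⟩
    have h0 := hP (y, s) hs'
    simp only [LY.DD_log hS h0, LY.D_log (hS (y, s)) h0.ne']
    rw [Finset.sum_sub_distrib, sub_add_cancel, ← Finset.sum_mul, hDt, hheat y s hs']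
    congr 1
    unfold laplacian
    refine Finset.sum_congr rfl fun i _ => ?_
    rw [LY.D_ee_eq ((hS _).D _)]
    simp only [hD]
end
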